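/- Let P ⊂ ℝ^n be a full-dimensional simple lattice polytope with the vertex data u_F, m_v^F, G(σ_v), χ_γ described in the context, and let E be any face of P. Let z ∈ ℂ^n be such that χ_γ(m_v^F)·exp(⟨m_v^F, z⟩) ≠ 1 for every vertex v of E, every γ ∈ G(σ_v), and every F ∈ 𝓕^v not containing E. Then Σ_{m ∈ ℤ^n ∩ E} exp(⟨m,z⟩) = Σ_{v vertex of E} (exp(⟨v,z⟩)/|G(σ_v)|) · Σ_{γ ∈ G(σ_v)} Π_{F ∈ 𝓕^v, E ⊄ F} 1/(1 − χ_γ(m_v^F)·exp(⟨m_v^F, z⟩)), where the product runs over those facets F containing v that do not contain E (these correspond exactly to the edges of E at v). -/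

import Mathlib

/-!
The formula is Brion's theorem for the face `E`. It is proved for every admissible `z` directly,
without convergence or analytic continuation.

*Regularised sums.* For a multiplicative `φ` (here `φ x = exp ⟨x, z⟩`), `RegSum φ f s` assigns a
value `s` to the formal sum `∑ x, f x * φ x`: finitely supported `f` have their honest sum, and if
`f - c • f (· - a)` has a value and `c * φ a ≠ 1`, then `f` gets that value divided by
`1 - c * φ a`. Such values are unique (`RegSum.unique`) and linear in `f`, a geometric series along
`a` gets the value `1 / (1 - c * φ a)`, and a function quasi-periodic along `a` gets the value `0`.

*Brianchon–Gram.* Within its affine hull, the indicator of `E` is the alternating sum, over the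
nonempty faces of `E`, of the indicators of the tangent cones along these faces
(`SimpleSystem.gram`). To see this at a point `x`, choose a linear functional `ξ` that is nonzero on
all edge directions (`exists_generic`) and group the faces by their `ξ`-lowest vertex. Since the
polytope is simple, the faces with a given lowest vertex form a Boolean interval, over which the
alternating sum collapses.

*Cones.* Lattice points are singled out among the points of `v + ∑ ℤ m_v^F` by averaging the
characters `χ_γ` over the finite group `G(σ_v)` (`SimpleSystem.latFun_eq`). The tangent cone along a
face of positive dimension is invariant under an edge direction, so its regularised sum is `0`; the
tangent cone at a vertex gives a product of geometric series, which is the term of that vertex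
(`SimpleSystem.regSum_latFun`). Summing the Brianchon–Gram relation gives `SimpleSystem.sum_exp`.

*Geometry.* The hypotheses used above are collected in `SimpleSystem`. They are obtained from the
facet description of `P` together with extreme points of compact convex sets: extreme points of `P`
are integral and are faces, linear functionals attain their minima at them, and `E` is cut out by
the facets containing it (`mem_face_iff`).
-/

open scoped Pointwise Classical
open MeasureTheory Polynomial

noncomputable section

/-- The real vector corresponding to an integer vector in `ℤ^n ⊂ ℝ^n`. -/
def intVec {n : ℕ} (m : Fin n → ℤ) : Fin n → ℝ := fun i => (m i : ℝ)

/-- `F` is a face of the polytope `P`: either `P` itself or a nonempty set of maximizers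
over `P` of a linear functional. -/
def IsFaceOf {n : ℕ} (P F : Set (Fin n → ℝ)) : Prop :=
  F = P ∨ (F.Nonempty ∧ ∃ u : (Fin n → ℝ) →ₗ[ℝ] ℝ,
    F = {x | x ∈ P ∧ ∀ p ∈ P, u p ≤ u x})

/-- The dimension of (the affine span of) a face. -/
noncomputable def faceDim {n : ℕ} (F : Set (Fin n → ℝ)) : ℕ :=
  Module.finrank ℝ (affineSpan ℝ F).direction

/-- A polytope `P ⊂ ℝ^n` is simple if every vertex (`0`-dimensional face) lies on
exactly `n` edges (`1`-dimensional faces). -/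
def IsSimple {n : ℕ} (P : Set (Fin n → ℝ)) : Prop :=
  ∀ v, IsFaceOf P v → faceDim v = 0 →
    {E | IsFaceOf P E ∧ faceDim E = 1 ∧ v ⊆ E}.ncard = n

/-- The pairing `⟨x, z⟩ = ∑ i, x i * z i` of a real vector with a complex vector,
extended complex-bilinearly. -/
def cpair {n : ℕ} (x : Fin n → ℝ) (z : Fin n → ℂ) : ℂ := ∑ i, (x i : ℂ) * z i

/-- `U(σ_v)`: the subgroup of `ℤ^n` generated by the primitive normals `u_F` of the
facets `F ∈ 𝓕^v` containing the vertex `v = x` (enumerated by `Fv x : Fin n → _`). -/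
def normalLattice {n : ℕ} (u : Set (Fin n → ℝ) → (Fin n → ℤ))
    (Fv : (Fin n → ℝ) → Fin n → Set (Fin n → ℝ)) (x : Fin n → ℝ) :
    Submodule ℤ (Fin n → ℤ) :=
  Submodule.span ℤ (Set.range fun j => u (Fv x j))

/-- The character value `χ_γ(m_v^F) = exp(2πi ⟨m_v^F, γ̃⟩)` for
`γ ∈ G(σ_v) = ℤ^n / U(σ_v)`, computed using a representative `γ̃` of `γ`. -/
noncomputable def chi {n : ℕ} (u : Set (Fin n → ℝ) → (Fin n → ℤ))
    (Fv : (Fin n → ℝ) → Fin n → Set (Fin n → ℝ))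
    (m : (Fin n → ℝ) → Fin n → (Fin n → ℝ)) (x : Fin n → ℝ)
    (γ : (Fin n → ℤ) ⧸ normalLattice u Fv x) (j : Fin n) : ℂ :=
  Complex.exp (2 * Real.pi * Complex.I *
    ∑ i, (m x j i : ℂ) * ((Quotient.out γ) i : ℂ))


/-! ### Regularised sums of exponentials -/

/-- `RegSum φ f s` says that the (possibly divergent) sum `∑ x, f x * φ x` has regularised value
`s`. Finitely supported functions have their honest sum; and if `f - c • f (· - a)` has a
regularised sum, where `c * φ a ≠ 1`, then dividing it by `1 - c * φ a` gives that of `f`. -/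
inductive RegSum {A : Type*} [AddCommGroup A] (φ : A → ℂ) : (A → ℂ) → ℂ → Prop
  | fin (f : A → ℂ) (T : Finset A) (h : ∀ x, x ∉ T → f x = 0) : RegSum φ f (∑ x ∈ T, f x * φ x)
  | step (f : A → ℂ) (s c : ℂ) (a : A) (hc : c * φ a ≠ 1)
      (h : RegSum φ (fun x => f x - c * f (x - a)) ((1 - c * φ a) * s)) : RegSum φ f s

namespace RegSum

variable {A : Type*} [AddCommGroup A] {φ : A → ℂ}

theorem smul {f : A → ℂ} {s : ℂ} (h : RegSum φ f s) (k : ℂ) :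
    RegSum φ (fun x => k * f x) (k * s) := by
  induction h with
  | fin f T h =>
    have := RegSum.fin (φ := φ) (fun x => k * f x) T (fun x hx => by simp [h x hx])
    convert this using 1
    rw [Finset.mul_sum]
    exact Finset.sum_congr rfl fun x _ => by ring
  | step f s c a hc h ih =>
    refine RegSum.step _ _ c a hc ?_
    convert ih using 1
    · funext x; ring
    · ring

/-- Finitely supported functions are stable under `f ↦ f - c • f (· - a)`, which multiplies the
sum by `1 - c * φ a`. -/
theorem finite_sub_translate (hφ : ∀ x y, φ (x + y) = φ x * φ y) (f : A → ℂ) (T : Finset A)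
    (h : ∀ x, x ∉ T → f x = 0) (c : ℂ) (a : A) :
    ∃ T' : Finset A, (∀ x, x ∉ T' → f x - c * f (x - a) = 0) ∧
      (1 - c * φ a) * ∑ x ∈ T, f x * φ x = ∑ x ∈ T', (f x - c * f (x - a)) * φ x := by
  refine ⟨T ∪ T.image (· + a), ?_, ?_⟩
  · intro x hx
    simp only [Finset.mem_union, Finset.mem_image, not_or, not_exists, not_and] at hx
    rw [h x hx.1, h (x - a) (fun h' => hx.2 _ h' (by simp))]
    simp
  · have e1 : ∑ x ∈ T ∪ T.image (· + a), f x * φ x = ∑ x ∈ T, f x * φ x := by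
      symm
      exact Finset.sum_subset Finset.subset_union_left (fun x _ hx => by simp [h x hx])
    have e2 : ∑ x ∈ T ∪ T.image (· + a), f (x - a) * φ x = φ a * ∑ x ∈ T, f x * φ x := by
      rw [← Finset.sum_subset (Finset.subset_union_right (s₁ := T)), Finset.sum_image,
        Finset.mul_sum]
      · exact Finset.sum_congr rfl fun x _ => by rw [hφ]; simp; ring
      · intro x _ y _ hxy
        simpa using hxy
      · intro x _ hx
        rw [h (x - a) (fun h' => hx (Finset.mem_image.2 ⟨_, h', by simp⟩))]
        simp
    simp only [sub_mul, Finset.sum_sub_distrib, mul_assoc, ← Finset.mul_sum]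
    rw [e1, e2]
    ring

/-- The defining operators `f ↦ f - c • f (· - a)` preserve regularised summability. -/
theorem sub_translate (hφ : ∀ x y, φ (x + y) = φ x * φ y) {f : A → ℂ} {s : ℂ}
    (h : RegSum φ f s) (c : ℂ) (a : A) :
    RegSum φ (fun x => f x - c * f (x - a)) ((1 - c * φ a) * s) := by
  induction h with
  | fin f T h =>
    obtain ⟨T', h1, h2⟩ := finite_sub_translate hφ f T h c a
    rw [h2]
    exact RegSum.fin _ T' h1
  | step f s d b hd h ih =>
    refine RegSum.step _ _ d b hd ?_
    convert ih using 1
    · funext x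
      simp only [sub_right_comm x a b]
      ring
    · ring

theorem add (hφ : ∀ x y, φ (x + y) = φ x * φ y) {f g : A → ℂ} {s t : ℂ}
    (hf : RegSum φ f s) (hg : RegSum φ g t) : RegSum φ (fun x => f x + g x) (s + t) := by
  induction hf generalizing g t with
  | fin f T h =>
    have main : ∀ (f : A → ℂ) (s : ℂ), (∃ T : Finset A, (∀ x ∉ T, f x = 0) ∧
        s = ∑ x ∈ T, f x * φ x) → RegSum φ (fun x => f x + g x) (s + t) := by
      clear h f T
      induction hg with
      | fin g T' h' =>
        rintro f s ⟨T, h, rfl⟩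
        have h1 := RegSum.fin (φ := φ) (fun x => f x + g x) (T ∪ T') (by
          intro x hx
          simp only [Finset.mem_union, not_or] at hx
          simp [h x hx.1, h' x hx.2])
        convert h1 using 1
        simp only [add_mul, Finset.sum_add_distrib]
        congr 1
        · exact Finset.sum_subset Finset.subset_union_left (fun x _ hx => by simp [h x hx])
        · exact Finset.sum_subset Finset.subset_union_right (fun x _ hx => by simp [h' x hx])
      | step g t c a hc hg ih =>
        rintro f s ⟨T, h, rfl⟩
        refine RegSum.step _ _ c a hc ?_
        have := ih (fun x => f x - c * f (x - a)) ((1 - c * φ a) * ∑ x ∈ T, f x * φ x) ?_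
        · convert this using 1
          · funext x; ring
          · ring
        · exact finite_sub_translate hφ f T h c a
    exact main f _ ⟨T, h, rfl⟩
  | step f s c a hc h ih =>
    refine RegSum.step _ _ c a hc ?_
    convert ih (hg.sub_translate hφ c a) using 1
    · funext x; ring
    · ring

theorem zero : RegSum φ (fun _ => 0) 0 := by
  simpa using RegSum.fin (φ := φ) (fun _ => 0) ∅ (fun _ _ => rfl)

theorem sum (hφ : ∀ x y, φ (x + y) = φ x * φ y) {κ : Type*} (T : Finset κ) {f : κ → A → ℂ}
    {s : κ → ℂ} (h : ∀ k ∈ T, RegSum φ (f k) (s k)) :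
    RegSum φ (fun x => ∑ k ∈ T, f k x) (∑ k ∈ T, s k) := by
  induction T using Finset.induction_on with
  | empty => simpa using zero
  | insert k T hk ih =>
    simp only [Finset.sum_insert hk]
    exact (h k (Finset.mem_insert_self _ _)).add hφ
      (ih fun k' hk' => h k' (Finset.mem_insert_of_mem hk'))

theorem eq_zero {f : A → ℂ} {s : ℂ} (h : RegSum φ f s) (hf : ∀ x, f x = 0) : s = 0 := by
  induction h with
  | fin f T h => simp [hf]
  | step f s c a hc h ih =>
    have := ih (fun x => by simp [hf])
    rcases mul_eq_zero.1 this with h0 | h0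
    · exact absurd (sub_eq_zero.1 h0).symm hc
    · exact h0

/-- Regularised sums are unique. -/
theorem unique (hφ : ∀ x y, φ (x + y) = φ x * φ y) {f : A → ℂ} {s t : ℂ}
    (hs : RegSum φ f s) (ht : RegSum φ f t) : s = t := by
  have := (hs.add hφ (ht.smul (-1))).eq_zero (fun x => by ring)
  linear_combination this

/-- A function that is quasi-periodic with multiplier not cancelled by `φ` has sum `0`. -/
theorem of_periodic {f : A → ℂ} (c : ℂ) (a : A) (hc : c * φ a ≠ 1)
    (h : ∀ x, f x = c * f (x - a)) : RegSum φ f 0 := by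
  refine RegSum.step _ _ c a hc ?_
  have : (fun x => f x - c * f (x - a)) = fun _ => 0 := by
    funext x
    rw [← h x, sub_self]
  rw [this, mul_zero]
  exact zero

theorem of_step {f g : A → ℂ} {s : ℂ} (c : ℂ) (a : A) (hc : c * φ a ≠ 1)
    (h : ∀ x, g x = f x - c * f (x - a)) (hg : RegSum φ g s) :
    RegSum φ f ((1 - c * φ a)⁻¹ * s) := by
  refine RegSum.step _ _ c a hc ?_
  have h1 : 1 - c * φ a ≠ 0 := sub_ne_zero.2 (Ne.symm hc)
  rw [mul_inv_cancel_left₀ h1, ← funext h]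
  exact hg

end RegSum

/-! ### Simple systems of integral inequalities -/

section System

variable {n : ℕ}

/-- The affine function `x ↦ ⟨x, u_F⟩ + λ_F` cutting out the facet `F`. -/
def affFun (u : Set (Fin n → ℝ) → (Fin n → ℤ)) (lam : Set (Fin n → ℝ) → ℤ)
    (F : Set (Fin n → ℝ)) (x : Fin n → ℝ) : ℝ :=
  x ⬝ᵥ intVec (u F) + (lam F : ℝ)

theorem affFun_add (u : Set (Fin n → ℝ) → (Fin n → ℤ)) (lam : Set (Fin n → ℝ) → ℤ)
    (F : Set (Fin n → ℝ)) (x d : Fin n → ℝ) :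
    affFun u lam F (x + d) = affFun u lam F x + d ⬝ᵥ intVec (u F) := by
  simp only [affFun, add_dotProduct]
  ring

theorem affFun_sub (u : Set (Fin n → ℝ) → (Fin n → ℤ)) (lam : Set (Fin n → ℝ) → ℤ)
    (F : Set (Fin n → ℝ)) (x d : Fin n → ℝ) :
    affFun u lam F (x - d) = affFun u lam F x - d ⬝ᵥ intVec (u F) := by
  simp only [affFun, sub_dotProduct]
  ring

/-- The facts about a simple lattice polytope used in the argument: `Fs` is the set of facets,
`V` the set of vertices, `Fv v` enumerates the facets through the vertex `v`, and `m v` is the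
basis dual to their normals. The field `exists_min` says that on every face cut out by a set `K`
of facets, each linear functional attains its minimum at a vertex. -/
structure SimpleSystem (u : Set (Fin n → ℝ) → (Fin n → ℤ)) (lam : Set (Fin n → ℝ) → ℤ)
    (Fv : (Fin n → ℝ) → Fin n → Set (Fin n → ℝ)) (m : (Fin n → ℝ) → Fin n → (Fin n → ℝ))
    (Fs : Finset (Set (Fin n → ℝ))) (V : Finset (Fin n → ℝ)) : Prop where
  feas : ∀ v ∈ V, ∀ k ∈ Fs, 0 ≤ affFun u lam k v
  inj : ∀ v ∈ V, Function.Injective (Fv v)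
  mem : ∀ v ∈ V, ∀ j, Fv v j ∈ Fs
  active : ∀ v ∈ V, ∀ k ∈ Fs, affFun u lam k v = 0 ↔ ∃ j, Fv v j = k
  dual : ∀ v ∈ V, ∀ j j' : Fin n,
    m v j ⬝ᵥ intVec (u (Fv v j')) = if j = j' then 1 else 0
  integral : ∀ v ∈ V, ∃ w : Fin n → ℤ, intVec w = v
  exists_min : ∀ K ⊆ Fs, ∀ ξ : Fin n → ℝ, (∃ v ∈ V, ∀ k ∈ K, affFun u lam k v = 0) →
    ∃ v ∈ V, (∀ k ∈ K, affFun u lam k v = 0) ∧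
      ∀ x, (∀ k ∈ Fs, 0 ≤ affFun u lam k x) → (∀ k ∈ K, affFun u lam k x = 0) →
        ξ ⬝ᵥ v ≤ ξ ⬝ᵥ x

/-- The set of facets through `v`. -/
def facetsAt (Fv : (Fin n → ℝ) → Fin n → Set (Fin n → ℝ)) (v : Fin n → ℝ) :
    Finset (Set (Fin n → ℝ)) := Finset.univ.image (Fv v)

/-- A feasible point stays feasible when moved slightly in a direction along which no active
constraint decreases. -/
theorem exists_small_step (u : Set (Fin n → ℝ) → (Fin n → ℤ)) (lam : Set (Fin n → ℝ) → ℤ)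
    (Fs : Finset (Set (Fin n → ℝ))) (v d : Fin n → ℝ)
    (hv : ∀ k ∈ Fs, 0 ≤ affFun u lam k v)
    (hd : ∀ k ∈ Fs, affFun u lam k v = 0 → 0 ≤ d ⬝ᵥ intVec (u k)) :
    ∃ ε : ℝ, 0 < ε ∧ ∀ k ∈ Fs, 0 ≤ affFun u lam k (v + ε • d) := by
  have key : ∀ᶠ ε : ℝ in nhdsWithin 0 (Set.Ioi 0),
      ∀ k ∈ Fs, 0 ≤ affFun u lam k (v + ε • d) := by
    rw [Filter.eventually_all_finset]
    intro k hk
    simp only [affFun_add, smul_dotProduct, smul_eq_mul]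
    rcases (hv k hk).eq_or_lt with h0 | h0
    · filter_upwards [self_mem_nhdsWithin] with ε hε
      rw [← h0, zero_add]
      exact mul_nonneg (le_of_lt hε) (hd k hk h0.symm)
    · have hc : Filter.Tendsto (fun ε : ℝ => affFun u lam k v + ε * (d ⬝ᵥ intVec (u k)))
          (nhds 0) (nhds (affFun u lam k v + 0 * (d ⬝ᵥ intVec (u k)))) :=
        (continuous_const.add (continuous_id.mul continuous_const)).tendsto 0
      rw [zero_mul, add_zero] at hc
      exact nhdsWithin_le_nhds ((hc.eventually (lt_mem_nhds h0)).mono fun _ h => h.le)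
  obtain ⟨ε, h1, h2⟩ := (key.and self_mem_nhdsWithin).exists
  exact ⟨ε, h2, h1⟩

namespace SimpleSystem

variable {u : Set (Fin n → ℝ) → (Fin n → ℤ)} {lam : Set (Fin n → ℝ) → ℤ}
  {Fv : (Fin n → ℝ) → Fin n → Set (Fin n → ℝ)} {m : (Fin n → ℝ) → Fin n → (Fin n → ℝ)}
  {Fs : Finset (Set (Fin n → ℝ))} {V : Finset (Fin n → ℝ)}

theorem facetsAt_subset (D : SimpleSystem u lam Fv m Fs V) {v : Fin n → ℝ} (hv : v ∈ V) :
    facetsAt Fv v ⊆ Fs := by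
  intro k hk
  obtain ⟨j, -, rfl⟩ := Finset.mem_image.1 hk
  exact D.mem v hv j

theorem mem_facetsAt (D : SimpleSystem u lam Fv m Fs V) {v : Fin n → ℝ} (hv : v ∈ V)
    {k : Set (Fin n → ℝ)} (hk : k ∈ Fs) : k ∈ facetsAt Fv v ↔ affFun u lam k v = 0 := by
  rw [D.active v hv k hk]
  simp [facetsAt]

theorem subset_facetsAt (D : SimpleSystem u lam Fv m Fs V) {v : Fin n → ℝ} (hv : v ∈ V)
    {K : Finset (Set (Fin n → ℝ))} (hK : K ⊆ Fs) :
    K ⊆ facetsAt Fv v ↔ ∀ k ∈ K, affFun u lam k v = 0 :=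
  forall₂_congr fun _ hk => D.mem_facetsAt hv (hK hk)

theorem affFun_Fv (D : SimpleSystem u lam Fv m Fs V) {v : Fin n → ℝ} (hv : v ∈ V) (j : Fin n) :
    affFun u lam (Fv v j) v = 0 :=
  (D.active v hv _ (D.mem v hv j)).2 ⟨j, rfl⟩

theorem card_facetsAt (D : SimpleSystem u lam Fv m Fs V) {v : Fin n → ℝ} (hv : v ∈ V) :
    (facetsAt Fv v).card = n := by
  rw [facetsAt, Finset.card_image_of_injective _ (D.inj v hv), Finset.card_univ, Fintype.card_fin]

/-- Expansion of a vector in the basis `m v`. -/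
theorem expand (D : SimpleSystem u lam Fv m Fs V) {v : Fin n → ℝ} (hv : v ∈ V)
    (d : Fin n → ℝ) : d = ∑ j, (d ⬝ᵥ intVec (u (Fv v j))) • m v j := by
  set M : Matrix (Fin n) (Fin n) ℝ := Matrix.of (m v) with hM
  set U : Matrix (Fin n) (Fin n) ℝ := Matrix.of fun i j => intVec (u (Fv v j)) i with hU
  have h1 : M * U = 1 := by
    ext j j'
    rw [Matrix.one_apply, ← D.dual v hv j j']
    rfl
  have h2 : U * M = 1 := mul_eq_one_comm.1 h1
  have h3 : Matrix.vecMul (Matrix.vecMul d U) M = d := by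
    rw [Matrix.vecMul_vecMul, h2, Matrix.vecMul_one]
  conv_lhs => rw [← h3]
  funext i
  rw [Finset.sum_apply]
  rfl

theorem expand_sub (D : SimpleSystem u lam Fv m Fs V) {v : Fin n → ℝ} (hv : v ∈ V)
    (x : Fin n → ℝ) : x - v = ∑ j, affFun u lam (Fv v j) x • m v j := by
  conv_lhs => rw [D.expand hv (x - v)]
  refine Finset.sum_congr rfl fun j _ => ?_
  congr 1
  have h1 := affFun_add u lam (Fv v j) v (x - v)
  rw [D.affFun_Fv hv, zero_add, add_sub_cancel] at h1
  exact h1.symm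

theorem m_ne_zero (D : SimpleSystem u lam Fv m Fs V) {v : Fin n → ℝ} (hv : v ∈ V) (j : Fin n) :
    m v j ≠ 0 := by
  intro h
  have := D.dual v hv j j
  simp [h] at this

theorem dotProduct_sub (D : SimpleSystem u lam Fv m Fs V) {v : Fin n → ℝ} (hv : v ∈ V)
    (ξ x : Fin n → ℝ) :
    ξ ⬝ᵥ x - ξ ⬝ᵥ v = ∑ j, affFun u lam (Fv v j) x * (ξ ⬝ᵥ m v j) := by
  rw [← _root_.dotProduct_sub, D.expand_sub hv x, dotProduct_sum]
  simp [dotProduct_smul]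

/-- On a face cut out by `K`, a vertex all of whose edges in the face are `ξ`-increasing is the
only minimiser of `ξ`. -/
theorem eq_of_le (D : SimpleSystem u lam Fv m Fs V) {ξ : Fin n → ℝ}
    {K : Finset (Set (Fin n → ℝ))} {v : Fin n → ℝ} (hv : v ∈ V)
    (hup : ∀ j, Fv v j ∉ K → 0 < ξ ⬝ᵥ m v j) {x : Fin n → ℝ}
    (hx : ∀ k ∈ Fs, 0 ≤ affFun u lam k x) (hxK : ∀ k ∈ K, affFun u lam k x = 0)
    (hle : ξ ⬝ᵥ x ≤ ξ ⬝ᵥ v) : x = v := by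
  have h1 := D.dotProduct_sub hv ξ x
  have h2 : ∀ j ∈ Finset.univ, 0 ≤ affFun u lam (Fv v j) x * (ξ ⬝ᵥ m v j) := by
    intro j _
    by_cases hj : Fv v j ∈ K
    · rw [hxK _ hj, zero_mul]
    · exact mul_nonneg (hx _ (D.mem v hv j)) (hup j hj).le
  have h3 : ∑ j, affFun u lam (Fv v j) x * (ξ ⬝ᵥ m v j) = 0 :=
    le_antisymm (by linarith) (Finset.sum_nonneg h2)
  rw [Finset.sum_eq_zero_iff_of_nonneg h2] at h3
  have h4 : x - v = 0 := by
    rw [D.expand_sub hv x]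
    refine Finset.sum_eq_zero fun j hj => ?_
    by_cases hjK : Fv v j ∈ K
    · rw [hxK _ hjK, zero_smul]
    · rcases mul_eq_zero.1 (h3 j hj) with h | h
      · rw [h, zero_smul]
      · exact absurd h (hup j hjK).ne'
  exact sub_eq_zero.1 h4

/-- For generic `ξ`, every face cut out by facets has exactly one vertex whose edges in the face
are all `ξ`-increasing. -/
theorem existsUnique_min (D : SimpleSystem u lam Fv m Fs V) {ξ : Fin n → ℝ}
    (hξ : ∀ v ∈ V, ∀ j, ξ ⬝ᵥ m v j ≠ 0) {K : Finset (Set (Fin n → ℝ))} (hK : K ⊆ Fs)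
    (hne : ∃ v ∈ V, K ⊆ facetsAt Fv v) :
    ∃! v, v ∈ V ∧ K ⊆ facetsAt Fv v ∧ ∀ j, Fv v j ∉ K → 0 < ξ ⬝ᵥ m v j := by
  obtain ⟨v₀, hv₀, hv₀K⟩ := hne
  obtain ⟨v, hv, hvK, hmin⟩ := D.exists_min K hK ξ ⟨v₀, hv₀, (D.subset_facetsAt hv₀ hK).1 hv₀K⟩
  have hup : ∀ j, Fv v j ∉ K → 0 < ξ ⬝ᵥ m v j := by
    intro j hj
    obtain ⟨ε, hε, hfeas⟩ := exists_small_step u lam Fs v (m v j) (D.feas v hv) (by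
      intro k hk hk0
      obtain ⟨j', rfl⟩ := (D.active v hv k hk).1 hk0
      rw [D.dual v hv]
      split_ifs <;> norm_num)
    have h1 := hmin _ hfeas (by
      intro k hk
      obtain ⟨j', rfl⟩ := (D.active v hv k (hK hk)).1 (hvK k hk)
      have hne : j ≠ j' := by
        rintro rfl
        exact hj hk
      rw [affFun_add, smul_dotProduct, D.dual v hv, if_neg hne, D.affFun_Fv hv]
      simp)
    rw [dotProduct_add, dotProduct_smul, smul_eq_mul] at h1
    have h2 : 0 ≤ ξ ⬝ᵥ m v j := nonneg_of_mul_nonneg_right (by linarith) hε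
    exact lt_of_le_of_ne h2 (hξ v hv j).symm
  refine ⟨v, ⟨hv, (D.subset_facetsAt hv hK).2 hvK, hup⟩, ?_⟩
  rintro w ⟨hw, hwK, hwup⟩
  have hwK' := (D.subset_facetsAt hw hK).1 hwK
  exact (D.eq_of_le hw hwup (D.feas v hv) hvK (hmin w (D.feas w hw) hwK')).symm

end SimpleSystem

end System

/-! ### A Brianchon–Gram identity for faces of simple systems -/

section Gram

variable {n : ℕ}

/-- Any `ξ₀` can be perturbed to be nonzero on finitely many given nonzero vectors, keeping
finitely many strict inequalities. -/
theorem exists_generic (M T : Finset (Fin n → ℝ)) (hM : ∀ x ∈ M, x ≠ 0) (ξ₀ : Fin n → ℝ)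
    (hT : ∀ d ∈ T, 0 < ξ₀ ⬝ᵥ d) :
    ∃ ξ : Fin n → ℝ, (∀ x ∈ M, ξ ⬝ᵥ x ≠ 0) ∧ ∀ d ∈ T, 0 < ξ ⬝ᵥ d := by
  obtain ⟨f, hf⟩ := Module.exists_dual_forall_apply_ne_zero (K := ℝ)
    (fun x : M => (x : Fin n → ℝ)) (fun x => hM x x.2)
  set η : Fin n → ℝ := (dotProductEquiv ℝ (Fin n)).symm f with hη
  have hfη : ∀ x, f x = η ⬝ᵥ x := by
    intro x
    have h : dotProductEquiv ℝ (Fin n) η = f := by simp [hη]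
    rw [← h]
    rfl
  have h1 : ∀ᶠ t : ℝ in nhdsWithin 0 {0}ᶜ, ∀ x ∈ M, (ξ₀ + t • η) ⬝ᵥ x ≠ 0 := by
    rw [Filter.eventually_all_finset]
    intro x hx
    have hx' : η ⬝ᵥ x ≠ 0 := by
      rw [← hfη]
      exact hf ⟨x, hx⟩
    simp only [add_dotProduct, smul_dotProduct, smul_eq_mul]
    by_cases h0 : ξ₀ ⬝ᵥ x = 0
    · filter_upwards [self_mem_nhdsWithin] with t ht
      rw [h0, zero_add]
      exact mul_ne_zero ht hx'
    · have hc : Filter.Tendsto (fun t : ℝ => ξ₀ ⬝ᵥ x + t * (η ⬝ᵥ x))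
          (nhds 0) (nhds (ξ₀ ⬝ᵥ x + 0 * (η ⬝ᵥ x))) :=
        (continuous_const.add (continuous_id.mul continuous_const)).tendsto 0
      rw [zero_mul, add_zero] at hc
      exact nhdsWithin_le_nhds (hc.eventually_ne h0)
  have h2 : ∀ᶠ t : ℝ in nhdsWithin 0 {0}ᶜ, ∀ d ∈ T, 0 < (ξ₀ + t • η) ⬝ᵥ d := by
    rw [Filter.eventually_all_finset]
    intro d hd
    simp only [add_dotProduct, smul_dotProduct, smul_eq_mul]
    have hc : Filter.Tendsto (fun t : ℝ => ξ₀ ⬝ᵥ d + t * (η ⬝ᵥ d))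
        (nhds 0) (nhds (ξ₀ ⬝ᵥ d + 0 * (η ⬝ᵥ d))) :=
      (continuous_const.add (continuous_id.mul continuous_const)).tendsto 0
    rw [zero_mul, add_zero] at hc
    exact nhdsWithin_le_nhds (hc.eventually (lt_mem_nhds (hT d hd)))
  obtain ⟨t, ht1, ht2⟩ := (h1.and h2).exists
  exact ⟨_, ht1, ht2⟩

theorem sum_Icc_neg_one_pow {α : Type*} [DecidableEq α] (L B : Finset α) :
    ∑ K ∈ Finset.Icc L B, (-1 : ℂ) ^ K.card = if L = B then (-1) ^ L.card else 0 := by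
  by_cases hLB : L ⊆ B
  · rw [Finset.Icc_eq_image_powerset hLB, Finset.sum_image]
    · have h1 : ∀ K ∈ (B \ L).powerset, (-1 : ℂ) ^ (L ∪ K).card = (-1) ^ L.card * (-1) ^ K.card := by
        intro K hK
        rw [Finset.card_union_of_disjoint, pow_add]
        exact Finset.disjoint_of_subset_right (Finset.mem_powerset.1 hK) Finset.disjoint_sdiff
      rw [Finset.sum_congr rfl h1, ← Finset.mul_sum]
      have h2 : ∑ K ∈ (B \ L).powerset, (-1 : ℂ) ^ K.card = if B \ L = ∅ then 1 else 0 := by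
        exact_mod_cast congrArg (Int.cast : ℤ → ℂ)
          (Finset.sum_powerset_neg_one_pow_card (x := B \ L))
      rw [h2]
      by_cases h : L = B
      · simp [h]
      · have h3 : B \ L ≠ ∅ := fun h' => h (hLB.antisymm (Finset.sdiff_eq_empty_iff_subset.1 h'))
        simp [h, h3]
    · intro K hK K' hK' h
      have hd : ∀ K ∈ (B \ L).powerset, (L ∪ K) \ L = K := by
        intro K hK
        rw [Finset.union_sdiff_left, Finset.sdiff_eq_self_iff_disjoint]
        exact Finset.disjoint_of_subset_left (Finset.mem_powerset.1 hK) Finset.sdiff_disjoint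
      rw [← hd K hK, ← hd K' hK']
      exact congrArg (· \ L) h
  · rw [Finset.Icc_eq_empty (by simpa using hLB), Finset.sum_empty, if_neg]
    rintro rfl
    exact hLB (Finset.Subset.refl _)

/-- The nonempty faces contained in the face cut out by `K₀`, each encoded by the set of facets
containing it. -/
def cells (Fv : (Fin n → ℝ) → Fin n → Set (Fin n → ℝ)) (Fs : Finset (Set (Fin n → ℝ)))
    (V : Finset (Fin n → ℝ)) (K₀ : Finset (Set (Fin n → ℝ))) :
    Finset (Finset (Set (Fin n → ℝ))) :=
  Fs.powerset.filter fun K => K₀ ⊆ K ∧ ∃ v ∈ V, K ⊆ facetsAt Fv v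

namespace SimpleSystem

variable {u : Set (Fin n → ℝ) → (Fin n → ℤ)} {lam : Set (Fin n → ℝ) → ℤ}
  {Fv : (Fin n → ℝ) → Fin n → Set (Fin n → ℝ)} {m : (Fin n → ℝ) → Fin n → (Fin n → ℝ)}
  {Fs : Finset (Set (Fin n → ℝ))} {V : Finset (Fin n → ℝ)}

/-- Grouping the faces by their `ξ`-lowest vertex `v`: the faces with lowest vertex `v` form the
interval between `K₀` together with the facets opposite to the `ξ`-decreasing edges at `v`, and
all facets at `v`. The alternating sum over this interval collapses. -/
theorem gram_generic (D : SimpleSystem u lam Fv m Fs V) {K₀ : Finset (Set (Fin n → ℝ))}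
    {ξ : Fin n → ℝ} (hξ : ∀ v ∈ V, ∀ j, ξ ⬝ᵥ m v j ≠ 0) (x : Fin n → ℝ) :
    ∑ K ∈ cells Fv Fs V K₀,
        (-1 : ℂ) ^ (n + K.card) * (if ∀ k ∈ K, 0 ≤ affFun u lam k x then 1 else 0) =
      ∑ v ∈ V with K₀ ⊆ facetsAt Fv v,
        if K₀ ∪ (Finset.univ.filter fun j => ξ ⬝ᵥ m v j < 0).image (Fv v) =
            (facetsAt Fv v).filter fun k => 0 ≤ affFun u lam k x
        then (-1 : ℂ) ^ (n + (K₀ ∪ (Finset.univ.filter fun j => ξ ⬝ᵥ m v j < 0).image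
          (Fv v)).card) else 0 := by
  set c : Finset (Set (Fin n → ℝ)) → ℂ := fun K =>
    (-1 : ℂ) ^ (n + K.card) * (if ∀ k ∈ K, 0 ≤ affFun u lam k x then 1 else 0) with hc
  have h1 : ∀ K ∈ cells Fv Fs V K₀, c K = ∑ v ∈ V,
      if K ⊆ facetsAt Fv v ∧ ∀ j, Fv v j ∉ K → 0 < ξ ⬝ᵥ m v j then c K else 0 := by
    intro K hK
    simp only [cells, Finset.mem_filter, Finset.mem_powerset] at hK
    obtain ⟨v, ⟨hv, hvK, hup⟩, huniq⟩ := D.existsUnique_min hξ hK.1 hK.2.2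
    rw [Finset.sum_eq_single v]
    · rw [if_pos ⟨hvK, hup⟩]
    · intro w hw hne
      rw [if_neg]
      rintro ⟨h, h'⟩
      exact hne (huniq w ⟨hw, h, h'⟩)
    · exact fun h => absurd hv h
  rw [Finset.sum_congr rfl h1, Finset.sum_comm, Finset.sum_filter]
  refine Finset.sum_congr rfl fun v hv => ?_
  by_cases hv0 : K₀ ⊆ facetsAt Fv v
  · rw [if_pos hv0]
    set L := K₀ ∪ (Finset.univ.filter fun j => ξ ⬝ᵥ m v j < 0).image (Fv v) with hL
    rw [← Finset.sum_filter]
    have h2 : (cells Fv Fs V K₀).filter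
        (fun K => K ⊆ facetsAt Fv v ∧ ∀ j, Fv v j ∉ K → 0 < ξ ⬝ᵥ m v j) =
        Finset.Icc L (facetsAt Fv v) := by
      ext K
      simp only [cells, Finset.mem_filter, Finset.mem_powerset, Finset.mem_Icc]
      constructor
      · rintro ⟨⟨_, hK0, _⟩, hKv, hup⟩
        refine ⟨Finset.union_subset hK0 ?_, hKv⟩
        intro k hk
        simp only [Finset.mem_image, Finset.mem_filter, Finset.mem_univ, true_and] at hk
        obtain ⟨j, hj, rfl⟩ := hk
        by_contra hjK
        exact absurd (hup j hjK) (not_lt.2 hj.le)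
      · rintro ⟨hLK, hKv⟩
        refine ⟨⟨hKv.trans (D.facetsAt_subset hv), Finset.subset_union_left.trans hLK,
          v, hv, hKv⟩, hKv, ?_⟩
        intro j hj
        by_contra hneg
        refine hj (hLK (Finset.mem_union_right _ (Finset.mem_image.2 ⟨j, ?_, rfl⟩)))
        simpa using lt_of_le_of_ne (not_lt.1 hneg) (hξ v hv j)
    rw [h2]
    simp only [hc, mul_ite, mul_one, mul_zero]
    rw [← Finset.sum_filter]
    have h3 : (Finset.Icc L (facetsAt Fv v)).filter (fun K => ∀ k ∈ K, 0 ≤ affFun u lam k x) =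
        Finset.Icc L ((facetsAt Fv v).filter fun k => 0 ≤ affFun u lam k x) := by
      ext K
      simp only [Finset.mem_filter, Finset.mem_Icc, and_assoc]
      refine and_congr_right fun _ => ⟨fun h k hk => ?_, fun h => ⟨?_, ?_⟩⟩
      · exact Finset.mem_filter.2 ⟨h.1 hk, h.2 k hk⟩
      · exact h.trans (Finset.filter_subset _ _)
      · exact fun k hk => (Finset.mem_filter.1 (h hk)).2
    rw [h3]
    simp only [pow_add, ← Finset.mul_sum]
    rw [sum_Icc_neg_one_pow, mul_ite, mul_zero]
  · rw [if_neg hv0]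
    refine Finset.sum_eq_zero fun K hK => ?_
    rw [if_neg]
    rintro ⟨h, -⟩
    simp only [cells, Finset.mem_filter] at hK
    exact hv0 (hK.2.1.trans h)

/-- The indicator of the face cut out by `K₀`, within its affine hull, is the alternating sum of
the indicators of the tangent cones along its faces. -/
theorem gram (D : SimpleSystem u lam Fv m Fs V) {K₀ : Finset (Set (Fin n → ℝ))} (hK₀ : K₀ ⊆ Fs)
    (hne : ∃ v ∈ V, K₀ ⊆ facetsAt Fv v) (x : Fin n → ℝ)
    (hx : ∀ k ∈ K₀, affFun u lam k x = 0) :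
    ∑ K ∈ cells Fv Fs V K₀,
        (-1 : ℂ) ^ (n + K.card) * (if ∀ k ∈ K, 0 ≤ affFun u lam k x then 1 else 0) =
      if ∀ k ∈ Fs, 0 ≤ affFun u lam k x then 1 else 0 := by
  set M : Finset (Fin n → ℝ) := V.biUnion fun v => Finset.univ.image (m v) with hM
  have hM0 : ∀ y ∈ M, y ≠ 0 := by
    intro y hy
    simp only [hM, Finset.mem_biUnion, Finset.mem_image, Finset.mem_univ, true_and] at hy
    obtain ⟨v, hv, j, rfl⟩ := hy
    exact D.m_ne_zero hv j
  have hMmem : ∀ v ∈ V, ∀ j, m v j ∈ M := fun v hv j =>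
    Finset.mem_biUnion.2 ⟨v, hv, Finset.mem_image_of_mem _ (Finset.mem_univ j)⟩
  by_cases hxP : ∀ k ∈ Fs, 0 ≤ affFun u lam k x
  · -- For a point of the polytope only the `ξ`-highest vertex of the face contributes.
    obtain ⟨ξ, hξ, -⟩ := exists_generic M ∅ hM0 0 (by simp)
    have hξ' : ∀ v ∈ V, ∀ j, ξ ⬝ᵥ m v j ≠ 0 := fun v hv j => hξ _ (hMmem v hv j)
    rw [D.gram_generic hξ' x, if_pos hxP]
    obtain ⟨v, ⟨hv, hvK, hup⟩, huniq⟩ := D.existsUnique_min (ξ := -ξ)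
      (fun v hv j => by rw [neg_dotProduct]; exact neg_ne_zero.2 (hξ' v hv j)) hK₀ hne
    have hfil : ∀ w ∈ V, ((facetsAt Fv w).filter fun k => 0 ≤ affFun u lam k x) =
        facetsAt Fv w := fun w hw =>
      Finset.filter_true_of_mem fun k hk => hxP k (D.facetsAt_subset hw hk)
    rw [Finset.sum_eq_single v]
    · have heq : K₀ ∪ (Finset.univ.filter fun j => ξ ⬝ᵥ m v j < 0).image (Fv v) =
          facetsAt Fv v := by
        refine Finset.Subset.antisymm
          (Finset.union_subset hvK (Finset.image_subset_image (Finset.filter_subset _ _))) ?_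
        intro k hk
        obtain ⟨j, -, rfl⟩ := Finset.mem_image.1 hk
        by_cases hj : Fv v j ∈ K₀
        · exact Finset.mem_union_left _ hj
        · refine Finset.mem_union_right _ (Finset.mem_image_of_mem _ ?_)
          have := hup j hj
          rw [neg_dotProduct] at this
          simpa using this
      rw [hfil v hv, heq, if_pos rfl, D.card_facetsAt hv, ← two_mul]
      simp
    · intro w hw hwv
      simp only [Finset.mem_filter] at hw
      rw [if_neg]
      intro h
      rw [hfil w hw.1] at h
      refine hwv (huniq w ⟨hw.1, hw.2, fun j hj => ?_⟩)
      have hmem : Fv w j ∈ facetsAt Fv w := Finset.mem_image_of_mem _ (Finset.mem_univ j)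
      rw [← h, Finset.mem_union] at hmem
      rcases hmem with h' | h'
      · exact absurd h' hj
      · simp only [Finset.mem_image, Finset.mem_filter, Finset.mem_univ, true_and] at h'
        obtain ⟨j', hj', he⟩ := h'
        rw [D.inj w hw.1 he] at hj'
        rw [neg_dotProduct]
        linarith
    · intro h
      exact absurd (Finset.mem_filter.2 ⟨hv, hvK⟩) h
  · -- For a point outside, no vertex contributes once `ξ` separates the point from the polytope.
    rw [if_neg hxP]
    push Not at hxP
    obtain ⟨k, hk, hkx⟩ := hxP
    obtain ⟨ξ, hξ, hsep⟩ := exists_generic M (V.image fun v => x - v) hM0 (-intVec (u k)) (by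
      intro d hd
      obtain ⟨v, hv, rfl⟩ := Finset.mem_image.1 hd
      have h1 := affFun_sub u lam k x (x - v)
      rw [sub_sub_cancel] at h1
      have h2 := D.feas v hv k hk
      rw [neg_dotProduct, dotProduct_comm]
      linarith)
    have hξ' : ∀ v ∈ V, ∀ j, ξ ⬝ᵥ m v j ≠ 0 := fun v hv j => hξ _ (hMmem v hv j)
    rw [D.gram_generic hξ' x]
    refine Finset.sum_eq_zero fun v hv => ?_
    simp only [Finset.mem_filter] at hv
    rw [if_neg]
    intro h
    have h1 := hsep _ (Finset.mem_image_of_mem _ hv.1)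
    rw [_root_.dotProduct_sub, D.dotProduct_sub hv.1] at h1
    refine absurd h1 (not_lt.2 (Finset.sum_nonpos fun j _ => ?_))
    have hA : Fv v j ∈ facetsAt Fv v := Finset.mem_image_of_mem _ (Finset.mem_univ j)
    have hj := Finset.ext_iff.1 h (Fv v j)
    simp only [Finset.mem_union, Finset.mem_image, Finset.mem_filter, Finset.mem_univ, true_and,
      (D.inj v hv.1).eq_iff, exists_eq_right, hA] at hj
    by_cases hjK : Fv v j ∈ K₀
    · rw [hx _ hjK, zero_mul]
    · rcases lt_or_ge (ξ ⬝ᵥ m v j) 0 with hd | hd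
      · exact mul_nonpos_of_nonneg_of_nonpos (hj.1 (Or.inr hd)) hd.le
      · refine mul_nonpos_of_nonpos_of_nonneg ?_ hd
        by_contra hpos
        rcases hj.2 (not_le.1 hpos).le with h' | h'
        · exact hjK h'
        · exact absurd h' (not_lt.2 hd)

end SimpleSystem

end Gram

/-! ### Characters and lattice points of cones -/

section Cones

variable {n : ℕ}

/-- The character value `exp (2πi ⟨w, p⟩)`. -/
def expPair (w : Fin n → ℝ) (p : Fin n → ℤ) : ℂ :=
  Complex.exp (2 * Real.pi * Complex.I * ∑ i, (w i : ℂ) * (p i : ℂ))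

theorem expPair_add_left (w w' : Fin n → ℝ) (p : Fin n → ℤ) :
    expPair (w + w') p = expPair w p * expPair w' p := by
  rw [expPair, expPair, expPair, ← Complex.exp_add, ← mul_add, ← Finset.sum_add_distrib]
  simp [add_mul]

theorem expPair_add_right (w : Fin n → ℝ) (p q : Fin n → ℤ) :
    expPair w (p + q) = expPair w p * expPair w q := by
  rw [expPair, expPair, expPair, ← Complex.exp_add, ← mul_add, ← Finset.sum_add_distrib]
  simp [mul_add]

theorem expPair_eq_one_of_int {w : Fin n → ℝ} {p : Fin n → ℤ} (t : ℤ)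
    (h : w ⬝ᵥ intVec p = t) : expPair w p = 1 := by
  have h' : ∑ i, (w i : ℂ) * (p i : ℂ) = t := by
    have := congrArg (fun r : ℝ => (r : ℂ)) h
    simpa [dotProduct, intVec] using this
  rw [expPair, h', Complex.exp_eq_one_iff]
  exact ⟨t, by ring⟩

/-- Vectors pairing integrally with generators of a lattice define characters trivial on it. -/
theorem expPair_eq_one_of_mem (u : Set (Fin n → ℝ) → (Fin n → ℤ))
    (Fv : (Fin n → ℝ) → Fin n → Set (Fin n → ℝ)) (v : Fin n → ℝ) {w : Fin n → ℝ}
    (hw : ∀ j, ∃ t : ℤ, w ⬝ᵥ intVec (u (Fv v j)) = t) {p : Fin n → ℤ}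
    (hp : p ∈ normalLattice u Fv v) : expPair w p = 1 := by
  suffices h : ∃ t : ℤ, w ⬝ᵥ intVec p = t by
    obtain ⟨t, ht⟩ := h
    exact expPair_eq_one_of_int t ht
  refine Submodule.span_induction (p := fun p _ => ∃ t : ℤ, w ⬝ᵥ intVec p = t)
    ?_ ?_ ?_ ?_ hp
  · rintro _ ⟨j, rfl⟩
    exact hw j
  · exact ⟨0, by simp [dotProduct, intVec]⟩
  · rintro p q _ _ ⟨s, hs⟩ ⟨t, ht⟩
    refine ⟨s + t, ?_⟩
    have : intVec (p + q) = intVec p + intVec q := by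
      funext i
      simp [intVec]
    rw [this, dotProduct_add, hs, ht]
    push_cast
    ring
  · rintro c p _ ⟨s, hs⟩
    refine ⟨c * s, ?_⟩
    have : intVec (c • p) = (c : ℝ) • intVec p := by
      funext i
      simp [intVec]
    rw [this, dotProduct_smul, hs]
    push_cast
    simp

/-- Orthogonality of characters of the finite group `ℤ^n / U(σ_v)`. -/
theorem sum_expPair (u : Set (Fin n → ℝ) → (Fin n → ℤ))
    (Fv : (Fin n → ℝ) → Fin n → Set (Fin n → ℝ)) (v : Fin n → ℝ)
    [Fintype ((Fin n → ℤ) ⧸ normalLattice u Fv v)] {w : Fin n → ℝ}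
    (hw : ∀ j, ∃ t : ℤ, w ⬝ᵥ intVec (u (Fv v j)) = t) :
    ∑ γ : (Fin n → ℤ) ⧸ normalLattice u Fv v, expPair w γ.out =
      if ∃ p : Fin n → ℤ, intVec p = w then
        (Nat.card ((Fin n → ℤ) ⧸ normalLattice u Fv v) : ℂ) else 0 := by
  split_ifs with h
  · obtain ⟨p, rfl⟩ := h
    have h1 : ∀ γ : (Fin n → ℤ) ⧸ normalLattice u Fv v, expPair (intVec p) γ.out = 1 := by
      intro γ
      refine expPair_eq_one_of_int (∑ i, p i * γ.out i) ?_
      simp [dotProduct, intVec]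
    simp [h1]
  · have h1 : ∃ i, ∀ t : ℤ, (t : ℝ) ≠ w i := by
      by_contra hcon
      push Not at hcon
      choose p hp using hcon
      exact h ⟨p, funext hp⟩
    obtain ⟨i, hi⟩ := h1
    set q : Fin n → ℤ := Pi.single i 1 with hq
    have hq1 : expPair w q ≠ 1 := by
      intro hone
      have hsum : ∑ i', (w i' : ℂ) * (q i' : ℂ) = (w i : ℂ) := by
        rw [Finset.sum_eq_single i]
        · simp [hq]
        · intro i' _ hne
          simp [hq, hne]
        · simp
      rw [expPair, hsum, Complex.exp_eq_one_iff] at hone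
      obtain ⟨t, ht⟩ := hone
      have h2 : (w i : ℂ) = t := by
        have hne := Complex.two_pi_I_ne_zero
        rw [mul_comm] at ht
        exact mul_right_cancel₀ hne ht
      exact hi t (by exact_mod_cast h2.symm)
    have hshift : ∀ γ : (Fin n → ℤ) ⧸ normalLattice u Fv v,
        expPair w (γ + Submodule.Quotient.mk q).out = expPair w q * expPair w γ.out := by
      intro γ
      have hmem : (γ + Submodule.Quotient.mk q).out - (γ.out + q) ∈ normalLattice u Fv v := by
        rw [← Submodule.Quotient.eq, Submodule.Quotient.mk_add]
        have e1 : ∀ δ : (Fin n → ℤ) ⧸ normalLattice u Fv v,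
            Submodule.Quotient.mk δ.out = δ := fun δ => Quotient.out_eq δ
        rw [e1, e1]
      have h3 := expPair_eq_one_of_mem u Fv v hw hmem
      have h4 := expPair_add_right w ((γ + Submodule.Quotient.mk q).out - (γ.out + q))
        (γ.out + q)
      rw [sub_add_cancel, h3, one_mul, expPair_add_right] at h4
      rw [h4, mul_comm]
    have h5 : ∑ γ : (Fin n → ℤ) ⧸ normalLattice u Fv v, expPair w γ.out =
        expPair w q * ∑ γ : (Fin n → ℤ) ⧸ normalLattice u Fv v, expPair w γ.out := by
      rw [Finset.mul_sum, ← Finset.sum_congr rfl (fun γ _ => hshift γ)]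
      exact (Equiv.sum_comp (Equiv.addRight
        (Submodule.Quotient.mk q : (Fin n → ℤ) ⧸ normalLattice u Fv v)) _).symm
    have h6 : (1 - expPair w q) *
        ∑ γ : (Fin n → ℤ) ⧸ normalLattice u Fv v, expPair w γ.out = 0 := by
      linear_combination h5
    exact (mul_eq_zero.1 h6).resolve_left (sub_ne_zero.2 hq1.symm)

/-- On the translate by `v` of the lattice generated by the `m_v^F`, restricted to the points
where the facet functions in `Z` vanish and those in `K` are nonnegative, the character `γ`
(normalised to be `1` at `v`); zero elsewhere. -/
def coneFun (u : Set (Fin n → ℝ) → (Fin n → ℤ)) (lam : Set (Fin n → ℝ) → ℤ)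
    (Fv : (Fin n → ℝ) → Fin n → Set (Fin n → ℝ)) (v : Fin n → ℝ) (p : Fin n → ℤ)
    (Z K : Finset (Set (Fin n → ℝ))) (x : Fin n → ℝ) : ℂ :=
  if (∀ j, ∃ t : ℤ, affFun u lam (Fv v j) x = t) ∧ (∀ k ∈ Z, affFun u lam k x = 0) ∧
    (∀ k ∈ K, 0 ≤ affFun u lam k x) then expPair (x - v) p else 0

/-- Indicator of the lattice points where the facet functions in `Z` vanish and those in `K` are
nonnegative. -/
def latFun (u : Set (Fin n → ℝ) → (Fin n → ℤ)) (lam : Set (Fin n → ℝ) → ℤ)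
    (Z K : Finset (Set (Fin n → ℝ))) (x : Fin n → ℝ) : ℂ :=
  if (∃ p : Fin n → ℤ, intVec p = x) ∧ (∀ k ∈ Z, affFun u lam k x = 0) ∧
    (∀ k ∈ K, 0 ≤ affFun u lam k x) then 1 else 0

namespace SimpleSystem

variable {u : Set (Fin n → ℝ) → (Fin n → ℤ)} {lam : Set (Fin n → ℝ) → ℤ}
  {Fv : (Fin n → ℝ) → Fin n → Set (Fin n → ℝ)} {m : (Fin n → ℝ) → Fin n → (Fin n → ℝ)}
  {Fs : Finset (Set (Fin n → ℝ))} {V : Finset (Fin n → ℝ)}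

theorem finite_quotient (D : SimpleSystem u lam Fv m Fs V) {v : Fin n → ℝ} (hv : v ∈ V) :
    Finite ((Fin n → ℤ) ⧸ normalLattice u Fv v) := by
  have hli : LinearIndependent ℤ fun j => u (Fv v j) := by
    rw [Fintype.linearIndependent_iff]
    intro c hc j
    have h1 : m v j ⬝ᵥ intVec (∑ j', c j' • u (Fv v j')) = c j := by
      have h2 : intVec (∑ j', c j' • u (Fv v j')) =
          ∑ j', (c j' : ℝ) • intVec (u (Fv v j')) := by
        funext i
        simp [intVec, Finset.sum_apply]
      rw [h2, dotProduct_sum]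
      simp [dotProduct_smul, D.dual v hv]
    rw [hc] at h1
    have h3 : (c j : ℝ) = 0 := by
      rw [← h1]
      simp [dotProduct, intVec]
    exact_mod_cast h3
  refine Submodule.finiteQuotientOfFreeOfRankEq _ ?_
  rw [normalLattice, finrank_span_eq_card hli]
  simp

theorem affFun_sub_m (D : SimpleSystem u lam Fv m Fs V) {v : Fin n → ℝ} (hv : v ∈ V)
    (j j' : Fin n) (x : Fin n → ℝ) :
    affFun u lam (Fv v j') (x - m v j) =
      affFun u lam (Fv v j') x - if j = j' then 1 else 0 := by
  rw [affFun_sub, D.dual v hv]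

theorem int_sub_m (D : SimpleSystem u lam Fv m Fs V) {v : Fin n → ℝ} (hv : v ∈ V)
    (j : Fin n) (x : Fin n → ℝ) :
    (∀ j', ∃ t : ℤ, affFun u lam (Fv v j') (x - m v j) = t) ↔
      ∀ j', ∃ t : ℤ, affFun u lam (Fv v j') x = t := by
  refine forall_congr' fun j' => ?_
  rw [D.affFun_sub_m hv]
  split_ifs
  · constructor
    · rintro ⟨t, ht⟩
      exact ⟨t + 1, by push_cast; linarith⟩
    · rintro ⟨t, ht⟩
      exact ⟨t - 1, by push_cast; linarith⟩
  · simp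

theorem affFun_sub_m_of_ne (D : SimpleSystem u lam Fv m Fs V) {v : Fin n → ℝ} (hv : v ∈ V)
    (j : Fin n) (x : Fin n → ℝ) {k : Set (Fin n → ℝ)} (hk : k ∈ facetsAt Fv v)
    (hne : k ≠ Fv v j) : affFun u lam k (x - m v j) = affFun u lam k x := by
  obtain ⟨j', -, rfl⟩ := Finset.mem_image.1 hk
  have : j ≠ j' := by
    rintro rfl
    exact hne rfl
  rw [D.affFun_sub_m hv, if_neg this, sub_zero]

/-- A cone unconstrained along the edge direction `m v j` has regularised sum zero. -/
theorem regSum_coneFun_zero (D : SimpleSystem u lam Fv m Fs V) {φ : (Fin n → ℝ) → ℂ}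
    {v : Fin n → ℝ} (hv : v ∈ V) (p : Fin n → ℤ) {Z K : Finset (Set (Fin n → ℝ))}
    (hZK : Z ⊆ K) (hK : K ⊆ facetsAt Fv v) {j : Fin n} (hj : Fv v j ∉ K)
    (hc : expPair (m v j) p * φ (m v j) ≠ 1) :
    RegSum φ (coneFun u lam Fv v p Z K) 0 := by
  refine RegSum.of_periodic (expPair (m v j) p) (m v j) hc fun x => ?_
  have hsame : ∀ k ∈ K, affFun u lam k (x - m v j) = affFun u lam k x := fun k hk =>
    D.affFun_sub_m_of_ne hv j x (hK hk) (fun h => hj (h ▸ hk))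
  have h1 : (∀ k ∈ Z, affFun u lam k (x - m v j) = 0) ↔ ∀ k ∈ Z, affFun u lam k x = 0 :=
    forall₂_congr fun k hk => by rw [hsame k (hZK hk)]
  have h2 : (∀ k ∈ K, 0 ≤ affFun u lam k (x - m v j)) ↔ ∀ k ∈ K, 0 ≤ affFun u lam k x :=
    forall₂_congr fun k hk => by rw [hsame k hk]
  have h3 : expPair (x - v) p = expPair (m v j) p * expPair (x - m v j - v) p := by
    rw [← expPair_add_left]
    congr 1
    abel
  simp only [coneFun, D.int_sub_m hv j x, h1, h2, mul_ite, mul_zero, ← h3]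

/-- Peeling off one edge direction of a simplicial cone. -/
theorem coneFun_insert (D : SimpleSystem u lam Fv m Fs V)
    {v : Fin n → ℝ} (hv : v ∈ V) (p : Fin n → ℤ) {Z : Finset (Set (Fin n → ℝ))}
    (hZ : Z ⊆ facetsAt Fv v) {j : Fin n} (hj : Fv v j ∉ Z) (x : Fin n → ℝ) :
    coneFun u lam Fv v p (insert (Fv v j) Z) (facetsAt Fv v) x =
      coneFun u lam Fv v p Z (facetsAt Fv v) x -
        expPair (m v j) p * coneFun u lam Fv v p Z (facetsAt Fv v) (x - m v j) := by
  have hA : Fv v j ∈ facetsAt Fv v := Finset.mem_image_of_mem _ (Finset.mem_univ j)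
  have h1 : (∀ k ∈ Z, affFun u lam k (x - m v j) = 0) ↔ ∀ k ∈ Z, affFun u lam k x = 0 :=
    forall₂_congr fun k hk => by
      rw [D.affFun_sub_m_of_ne hv j x (hZ hk) (fun h => hj (h ▸ hk))]
  have h3 : expPair (x - v) p = expPair (m v j) p * expPair (x - m v j - v) p := by
    rw [← expPair_add_left]
    congr 1
    abel
  have hsplit : ∀ y, (∀ k ∈ facetsAt Fv v, 0 ≤ affFun u lam k y) ↔
      0 ≤ affFun u lam (Fv v j) y ∧
        ∀ k ∈ (facetsAt Fv v).erase (Fv v j), 0 ≤ affFun u lam k y := by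
    intro y
    conv_lhs => rw [← Finset.insert_erase hA]
    rw [Finset.forall_mem_insert]
  have h2 : (∀ k ∈ (facetsAt Fv v).erase (Fv v j), 0 ≤ affFun u lam k (x - m v j)) ↔
      ∀ k ∈ (facetsAt Fv v).erase (Fv v j), 0 ≤ affFun u lam k x :=
    forall₂_congr fun k hk => by
      rw [D.affFun_sub_m_of_ne hv j x (Finset.mem_of_mem_erase hk) (Finset.ne_of_mem_erase hk)]
  set C : Prop := (∀ j', ∃ t : ℤ, affFun u lam (Fv v j') x = t) ∧
    (∀ k ∈ Z, affFun u lam k x = 0) ∧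
    (∀ k ∈ (facetsAt Fv v).erase (Fv v j), 0 ≤ affFun u lam k x) with hC
  have i1 : ((∀ j', ∃ t : ℤ, affFun u lam (Fv v j') x = t) ∧
      (∀ k ∈ insert (Fv v j) Z, affFun u lam k x = 0) ∧
      (∀ k ∈ facetsAt Fv v, 0 ≤ affFun u lam k x)) ↔ C ∧ affFun u lam (Fv v j) x = 0 := by
    rw [hsplit, Finset.forall_mem_insert, hC]
    constructor
    · rintro ⟨p1, ⟨p2, p3⟩, p4, p5⟩
      exact ⟨⟨p1, p3, p5⟩, p2⟩
    · rintro ⟨⟨p1, p3, p5⟩, p2⟩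
      exact ⟨p1, ⟨p2, p3⟩, p2.ge, p5⟩
  have i2 : ((∀ j', ∃ t : ℤ, affFun u lam (Fv v j') x = t) ∧
      (∀ k ∈ Z, affFun u lam k x = 0) ∧
      (∀ k ∈ facetsAt Fv v, 0 ≤ affFun u lam k x)) ↔ C ∧ 0 ≤ affFun u lam (Fv v j) x := by
    rw [hsplit, hC]
    exact ⟨fun q => ⟨⟨q.1, q.2.1, q.2.2.2⟩, q.2.2.1⟩, fun q => ⟨q.1.1, q.1.2.1, q.2, q.1.2.2⟩⟩
  have i3 : ((∀ j', ∃ t : ℤ, affFun u lam (Fv v j') (x - m v j) = t) ∧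
      (∀ k ∈ Z, affFun u lam k (x - m v j) = 0) ∧
      (∀ k ∈ facetsAt Fv v, 0 ≤ affFun u lam k (x - m v j))) ↔
      C ∧ 1 ≤ affFun u lam (Fv v j) x := by
    rw [D.int_sub_m hv j x, h1, hsplit, h2, D.affFun_sub_m hv, if_pos rfl, sub_nonneg, hC]
    exact ⟨fun q => ⟨⟨q.1, q.2.1, q.2.2.2⟩, q.2.2.1⟩, fun q => ⟨q.1.1, q.1.2.1, q.2, q.1.2.2⟩⟩
  unfold coneFun
  rw [if_congr i1 rfl rfl, if_congr i2 rfl rfl, if_congr i3 rfl rfl, mul_ite, mul_zero, ← h3]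
  by_cases hCt : C
  · obtain ⟨t, ht⟩ := hCt.1 j
    rcases lt_trichotomy t 0 with h | h | h
    · have h' : (t : ℝ) < 0 := by exact_mod_cast h
      rw [if_neg (fun q => by linarith [q.2]), if_neg (fun q => by linarith [q.2]),
        if_neg (fun q => by linarith [q.2]), sub_zero]
    · have h' : (t : ℝ) = 0 := by exact_mod_cast h
      rw [if_pos ⟨hCt, by linarith⟩, if_pos ⟨hCt, by linarith⟩,
        if_neg (fun q => by linarith [q.2]), sub_zero]
    · have h' : (1 : ℝ) ≤ t := by exact_mod_cast h
      rw [if_neg (fun q => by linarith [q.2]), if_pos ⟨hCt, by linarith⟩,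
        if_pos ⟨hCt, by linarith⟩, sub_self]
  · rw [if_neg (fun q => hCt q.1), if_neg (fun q => hCt q.1), if_neg (fun q => hCt q.1), sub_zero]

/-- The regularised sum over the part of the vertex cone at `v` where the functions in `Z` vanish
is the product of the geometric series along the remaining edges. -/
theorem regSum_coneFun_vertex (D : SimpleSystem u lam Fv m Fs V) {φ : (Fin n → ℝ) → ℂ}
    {v : Fin n → ℝ} (hv : v ∈ V) (p : Fin n → ℤ) (J : Finset (Fin n)) :
    ∀ Z : Finset (Set (Fin n → ℝ)), Z ⊆ facetsAt Fv v →
      (Finset.univ.filter fun j => Fv v j ∉ Z) = J →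
      (∀ j ∈ J, expPair (m v j) p * φ (m v j) ≠ 1) →
      RegSum φ (coneFun u lam Fv v p Z (facetsAt Fv v))
        (φ v * ∏ j ∈ J, (1 - expPair (m v j) p * φ (m v j))⁻¹) := by
  induction J using Finset.induction_on with
  | empty =>
    intro Z hZ hJ _
    have hall : ∀ j, Fv v j ∈ Z := by
      intro j
      by_contra h
      have : j ∈ (Finset.univ.filter fun j => Fv v j ∉ Z) := by simp [h]
      rw [hJ] at this
      simp at this
    have hfun : ∀ x, coneFun u lam Fv v p Z (facetsAt Fv v) x = if x = v then 1 else 0 := by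
      intro x
      rw [coneFun]
      by_cases hx : x = v
      · subst hx
        have h0 : ∀ k ∈ facetsAt Fv x, affFun u lam k x = 0 := by
          intro k hk
          exact (D.mem_facetsAt hv (D.facetsAt_subset hv hk)).1 hk
        rw [if_pos, if_pos rfl]
        · rw [sub_self]
          exact expPair_eq_one_of_int 0 (by simp)
        · exact ⟨fun j => ⟨0, by simp [D.affFun_Fv hv]⟩, fun k hk => h0 k (hZ hk),
            fun k hk => (h0 k hk).ge⟩
      · rw [if_neg, if_neg hx]
        rintro ⟨-, h, -⟩
        apply hx
        rw [← sub_eq_zero, D.expand_sub hv x]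
        exact Finset.sum_eq_zero fun j _ => by rw [h _ (hall j), zero_smul]
    have := RegSum.fin (φ := φ) (coneFun u lam Fv v p Z (facetsAt Fv v)) {v} (by
      intro x hx
      rw [hfun, if_neg (by simpa using hx)])
    simpa [hfun] using this
  | insert j J hjJ ih =>
    intro Z hZ hJ hc
    have hj : Fv v j ∉ Z := by
      have : j ∈ Finset.univ.filter fun j => Fv v j ∉ Z := by
        rw [hJ]
        exact Finset.mem_insert_self _ _
      simpa using this
    have hA : Fv v j ∈ facetsAt Fv v := Finset.mem_image_of_mem _ (Finset.mem_univ j)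
    have h1 := ih (insert (Fv v j) Z) (Finset.insert_subset hA hZ) (by
      ext j'
      have := Finset.ext_iff.1 hJ j'
      simp only [Finset.mem_filter, Finset.mem_univ, true_and, Finset.mem_insert,
        (D.inj v hv).eq_iff, not_or] at this ⊢
      rw [this]
      constructor
      · rintro ⟨h, h' | h'⟩
        · exact absurd h' h
        · exact h'
      · intro h
        exact ⟨fun e => hjJ (e ▸ h), Or.inr h⟩) (fun j' hj' => hc j' (Finset.mem_insert_of_mem hj'))
    have h2 := RegSum.of_step (expPair (m v j) p) (m v j) (hc j (Finset.mem_insert_self _ _))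
      (D.coneFun_insert hv p hZ hj) h1
    rw [Finset.prod_insert hjJ]
    convert h2 using 1
    ring

/-- Averaging over characters selects the integral points. -/
theorem latFun_eq (D : SimpleSystem u lam Fv m Fs V) {v : Fin n → ℝ} (hv : v ∈ V)
    [Fintype ((Fin n → ℤ) ⧸ normalLattice u Fv v)] (Z K : Finset (Set (Fin n → ℝ)))
    (x : Fin n → ℝ) :
    latFun u lam Z K x = (Nat.card ((Fin n → ℤ) ⧸ normalLattice u Fv v) : ℂ)⁻¹ *
      ∑ γ : (Fin n → ℤ) ⧸ normalLattice u Fv v, coneFun u lam Fv v γ.out Z K x := by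
  have hcard : (Nat.card ((Fin n → ℤ) ⧸ normalLattice u Fv v) : ℂ) ≠ 0 := by
    have := D.finite_quotient hv
    exact_mod_cast Nat.card_pos.ne'
  obtain ⟨w, hw⟩ := D.integral v hv
  by_cases hinteg : ∀ j, ∃ t : ℤ, affFun u lam (Fv v j) x = t
  · by_cases hZK : (∀ k ∈ Z, affFun u lam k x = 0) ∧ (∀ k ∈ K, 0 ≤ affFun u lam k x)
    · have h1 : ∀ γ : (Fin n → ℤ) ⧸ normalLattice u Fv v,
          coneFun u lam Fv v γ.out Z K x = expPair (x - v) γ.out := by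
        intro γ
        rw [coneFun, if_pos ⟨hinteg, hZK⟩]
      have h2 : ∀ j, ∃ t : ℤ, (x - v) ⬝ᵥ intVec (u (Fv v j)) = t := by
        intro j
        obtain ⟨t, ht⟩ := hinteg j
        refine ⟨t, ?_⟩
        have h3 := affFun_add u lam (Fv v j) v (x - v)
        rw [D.affFun_Fv hv, zero_add, add_sub_cancel] at h3
        rw [← h3, ht]
      have h4 : (∃ p : Fin n → ℤ, intVec p = x - v) ↔ ∃ p : Fin n → ℤ, intVec p = x := by
        constructor
        · rintro ⟨p, hp⟩
          refine ⟨p + w, ?_⟩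
          funext i
          have h5 := congrFun hp i
          have h6 := congrFun hw i
          simp only [intVec, Pi.sub_apply, Pi.add_apply, Int.cast_add] at h5 h6 ⊢
          linarith
        · rintro ⟨p, hp⟩
          refine ⟨p - w, ?_⟩
          funext i
          have h5 := congrFun hp i
          have h6 := congrFun hw i
          simp only [intVec, Pi.sub_apply, Int.cast_sub] at h5 h6 ⊢
          linarith
      rw [Finset.sum_congr rfl (fun γ _ => h1 γ), sum_expPair u Fv v h2, latFun]
      by_cases h : ∃ p : Fin n → ℤ, intVec p = x
      · rw [if_pos ⟨h, hZK⟩, if_pos (h4.2 h), inv_mul_cancel₀ hcard]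
      · rw [if_neg (fun q => h q.1), if_neg (fun q => h (h4.1 q)), mul_zero]
    · rw [latFun, if_neg (fun h => hZK h.2), Finset.sum_eq_zero, mul_zero]
      intro γ _
      rw [coneFun, if_neg (fun h => hZK h.2)]
  · rw [latFun, if_neg, Finset.sum_eq_zero, mul_zero]
    · intro γ _
      rw [coneFun, if_neg (fun h => hinteg h.1)]
    · rintro ⟨⟨p, rfl⟩, -⟩
      refine hinteg fun j => ⟨∑ i, p i * u (Fv v j) i + lam (Fv v j), ?_⟩
      simp [affFun, dotProduct, intVec]

end SimpleSystem

end Cones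

/-! ### The lattice point formula for a simple system -/

section Brion

variable {n : ℕ}

/-- The contribution of the vertex `v` to the sum over the face cut out by `K₀`. -/
def vertexTerm (u : Set (Fin n → ℝ) → (Fin n → ℤ))
    (Fv : (Fin n → ℝ) → Fin n → Set (Fin n → ℝ)) (m : (Fin n → ℝ) → Fin n → (Fin n → ℝ))
    (z : Fin n → ℂ) (K₀ : Finset (Set (Fin n → ℝ))) (v : Fin n → ℝ) : ℂ :=
  Complex.exp (cpair v z) / (Nat.card ((Fin n → ℤ) ⧸ normalLattice u Fv v) : ℂ) *
    ∑ᶠ γ : (Fin n → ℤ) ⧸ normalLattice u Fv v,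
      ∏ j ∈ Finset.univ.filter (fun j : Fin n => Fv v j ∉ K₀),
        (1 - chi u Fv m v γ j * Complex.exp (cpair (m v j) z))⁻¹

theorem exp_cpair_add (z : Fin n → ℂ) (x y : Fin n → ℝ) :
    Complex.exp (cpair (x + y) z) = Complex.exp (cpair x z) * Complex.exp (cpair y z) := by
  rw [← Complex.exp_add, cpair, cpair, cpair, ← Finset.sum_add_distrib]
  simp [add_mul]

theorem intVec_injective : Function.Injective (intVec (n := n)) := by
  intro p q h
  funext i
  have := congrFun h i
  simpa [intVec] using this

namespace SimpleSystem

variable {u : Set (Fin n → ℝ) → (Fin n → ℤ)} {lam : Set (Fin n → ℝ) → ℤ}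
  {Fv : (Fin n → ℝ) → Fin n → Set (Fin n → ℝ)} {m : (Fin n → ℝ) → Fin n → (Fin n → ℝ)}
  {Fs : Finset (Set (Fin n → ℝ))} {V : Finset (Fin n → ℝ)}

theorem facetsAt_injOn (D : SimpleSystem u lam Fv m Fs V) {v w : Fin n → ℝ} (hv : v ∈ V)
    (hw : w ∈ V) (h : facetsAt Fv v = facetsAt Fv w) : w = v := by
  rw [← sub_eq_zero, D.expand_sub hv w]
  refine Finset.sum_eq_zero fun j _ => ?_
  have h1 : Fv v j ∈ facetsAt Fv w := by
    rw [← h]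
    exact Finset.mem_image_of_mem _ (Finset.mem_univ j)
  rw [(D.mem_facetsAt hw (D.mem v hv j)).1 h1, zero_smul]

/-- The tangent cone along a face has regularised sum zero, unless the face is a vertex, where
it is the contribution of that vertex. -/
theorem regSum_latFun (D : SimpleSystem u lam Fv m Fs V) {K₀ : Finset (Set (Fin n → ℝ))}
    {z : Fin n → ℂ}
    (hz : ∀ v ∈ V, K₀ ⊆ facetsAt Fv v → ∀ γ : (Fin n → ℤ) ⧸ normalLattice u Fv v,
      ∀ j, Fv v j ∉ K₀ → chi u Fv m v γ j * Complex.exp (cpair (m v j) z) ≠ 1)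
    {K : Finset (Set (Fin n → ℝ))} (hK : K ∈ cells Fv Fs V K₀) :
    RegSum (fun x => Complex.exp (cpair x z)) (latFun u lam K₀ K)
      (∑ v ∈ V.filter (fun v => K₀ ⊆ facetsAt Fv v) with facetsAt Fv v = K,
        vertexTerm u Fv m z K₀ v) := by
  simp only [cells, Finset.mem_filter, Finset.mem_powerset] at hK
  obtain ⟨-, hK₀K, v, hv, hKv⟩ := hK
  have hfin := D.finite_quotient hv
  have hft : Fintype ((Fin n → ℤ) ⧸ normalLattice u Fv v) := Fintype.ofFinite _
  have hK₀v : K₀ ⊆ facetsAt Fv v := hK₀K.trans hKv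
  rw [funext (D.latFun_eq hv K₀ K)]
  by_cases heq : facetsAt Fv v = K
  · have hfilter : ((V.filter (fun v => K₀ ⊆ facetsAt Fv v)).filter
        (fun w => facetsAt Fv w = K)) = {v} := by
      ext w
      simp only [Finset.mem_filter, Finset.mem_singleton]
      constructor
      · rintro ⟨⟨hw, -⟩, hwK⟩
        exact D.facetsAt_injOn hv hw (heq.trans hwK.symm)
      · rintro rfl
        exact ⟨⟨hv, hK₀v⟩, heq⟩
    rw [hfilter, Finset.sum_singleton]
    subst heq
    have h1 := (RegSum.sum (exp_cpair_add z) Finset.univ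
      (fun (γ : (Fin n → ℤ) ⧸ normalLattice u Fv v) _ =>
        D.regSum_coneFun_vertex (φ := fun x => Complex.exp (cpair x z)) hv γ.out
          (Finset.univ.filter fun j => Fv v j ∉ K₀) K₀ hK₀v rfl (by
            intro j hj
            exact hz v hv hK₀v γ j (by simpa using hj)))).smul
      (Nat.card ((Fin n → ℤ) ⧸ normalLattice u Fv v) : ℂ)⁻¹
    convert h1 using 1
    rw [vertexTerm, finsum_eq_sum_of_fintype, ← Finset.mul_sum, div_eq_inv_mul, mul_assoc]
    rfl
  · have hfilter : ((V.filter (fun v => K₀ ⊆ facetsAt Fv v)).filter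
        (fun w => facetsAt Fv w = K)) = ∅ := by
      refine Finset.filter_eq_empty_iff.2 fun w hw hwK => ?_
      have hw' := (Finset.mem_filter.1 hw).1
      refine heq (Finset.eq_of_subset_of_card_le hKv ?_).symm
      rw [← hwK, D.card_facetsAt hw', D.card_facetsAt hv]
    obtain ⟨k, hkv, hkK⟩ := Finset.exists_of_ssubset
      (Finset.ssubset_iff_subset_ne.2 ⟨hKv, fun h => heq h.symm⟩)
    obtain ⟨j, -, rfl⟩ := Finset.mem_image.1 hkv
    rw [hfilter, Finset.sum_empty]
    have h1 := (RegSum.sum (exp_cpair_add z) Finset.univ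
      (fun (γ : (Fin n → ℤ) ⧸ normalLattice u Fv v) _ =>
        D.regSum_coneFun_zero (φ := fun x => Complex.exp (cpair x z)) hv γ.out hK₀K hKv hkK
          (hz v hv hK₀v γ j (fun h => hkK (hK₀K h))))).smul
      (Nat.card ((Fin n → ℤ) ⧸ normalLattice u Fv v) : ℂ)⁻¹
    simpa using h1

/-- The exponential sum over the lattice points `T` of the face cut out by `K₀` is the sum of the
contributions of the vertices of that face. -/
theorem sum_exp (D : SimpleSystem u lam Fv m Fs V) {K₀ : Finset (Set (Fin n → ℝ))}
    (hK₀ : K₀ ⊆ Fs) (hne : ∃ v ∈ V, K₀ ⊆ facetsAt Fv v) {z : Fin n → ℂ}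
    (hz : ∀ v ∈ V, K₀ ⊆ facetsAt Fv v → ∀ γ : (Fin n → ℤ) ⧸ normalLattice u Fv v,
      ∀ j, Fv v j ∉ K₀ → chi u Fv m v γ j * Complex.exp (cpair (m v j) z) ≠ 1)
    (T : Finset (Fin n → ℤ))
    (hT : ∀ p, p ∈ T ↔ (∀ k ∈ K₀, affFun u lam k (intVec p) = 0) ∧
      ∀ k ∈ Fs, 0 ≤ affFun u lam k (intVec p)) :
    ∑ p ∈ T, Complex.exp (cpair (intVec p) z) =
      ∑ v ∈ V with K₀ ⊆ facetsAt Fv v, vertexTerm u Fv m z K₀ v := by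
  -- the finite sum, read as a regularised sum
  have h1 : RegSum (fun x => Complex.exp (cpair x z)) (latFun u lam K₀ Fs)
      (∑ p ∈ T, Complex.exp (cpair (intVec p) z)) := by
    have h := RegSum.fin (φ := fun x => Complex.exp (cpair x z)) (latFun u lam K₀ Fs)
      (T.image intVec) (by
        intro x hx
        rw [latFun, if_neg]
        rintro ⟨⟨p, rfl⟩, hp⟩
        exact hx (Finset.mem_image_of_mem _ ((hT p).2 hp)))
    rw [Finset.sum_image (fun _ _ _ _ h => intVec_injective h)] at h
    convert h using 1
    refine Finset.sum_congr rfl fun p hp => ?_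
    rw [latFun, if_pos ⟨⟨p, rfl⟩, (hT p).1 hp⟩, one_mul]
  have h2 := RegSum.sum (exp_cpair_add z) (cells Fv Fs V K₀)
    (fun K hK => (D.regSum_latFun hz hK).smul ((-1 : ℂ) ^ (n + K.card)))
  have h3 : (fun x => ∑ K ∈ cells Fv Fs V K₀, (-1 : ℂ) ^ (n + K.card) * latFun u lam K₀ K x) =
      latFun u lam K₀ Fs := by
    funext x
    by_cases hx : (∃ p : Fin n → ℤ, intVec p = x) ∧ ∀ k ∈ K₀, affFun u lam k x = 0
    · have e : ∀ K : Finset (Set (Fin n → ℝ)), latFun u lam K₀ K x =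
          if ∀ k ∈ K, 0 ≤ affFun u lam k x then 1 else 0 := by
        intro K
        rw [latFun]
        exact if_congr ⟨fun h => h.2.2, fun h => ⟨hx.1, hx.2, h⟩⟩ rfl rfl
      rw [e, ← D.gram hK₀ hne x hx.2]
      exact Finset.sum_congr rfl fun K _ => by rw [e]
    · have e : ∀ K : Finset (Set (Fin n → ℝ)), latFun u lam K₀ K x = 0 := by
        intro K
        rw [latFun, if_neg (fun h => hx ⟨h.1, h.2.1⟩)]
      simp [e]
  rw [h3] at h2
  rw [h1.unique (exp_cpair_add z) h2, ← Finset.sum_fiberwise_of_maps_to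
    (s := V.filter fun v => K₀ ⊆ facetsAt Fv v) (t := cells Fv Fs V K₀) (g := facetsAt Fv)]
  · refine Finset.sum_congr rfl fun K hK => ?_
    rw [Finset.mul_sum]
    refine Finset.sum_congr rfl fun v hv => ?_
    simp only [Finset.mem_filter] at hv
    rw [← hv.2, D.card_facetsAt hv.1.1, ← two_mul, pow_mul]
    simp
  · intro v hv
    simp only [Finset.mem_filter] at hv
    simp only [cells, Finset.mem_filter, Finset.mem_powerset]
    exact ⟨D.facetsAt_subset hv.1, hv.2, v, hv.1, Finset.Subset.refl _⟩

end SimpleSystem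

end Brion

/-! ### Faces of a polytope -/

section Geometry

variable {n : ℕ}

theorem IsFaceOf.isExposed {P F : Set (Fin n → ℝ)} (h : IsFaceOf P F) : IsExposed ℝ P F := by
  rcases h with rfl | ⟨-, w, hw⟩
  · exact IsExposed.refl _
  · intro _
    exact ⟨LinearMap.toContinuousLinearMap w, hw⟩

/-- A polytope has finitely many faces, because a face is determined by its extreme points. -/
theorem finite_setOf_isFaceOf {P : Set (Fin n → ℝ)} (hc : IsCompact P) (hconv : Convex ℝ P)
    (hfin : (P.extremePoints ℝ).Finite) : {F | IsFaceOf P F}.Finite := by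
  refine Set.Finite.of_finite_image (f := fun F => F.extremePoints ℝ)
    (hfin.finite_subsets.subset ?_) ?_
  · rintro _ ⟨F, hF, rfl⟩
    exact (IsFaceOf.isExposed hF).isExtreme.extremePoints_subset_extremePoints
  · intro F hF G hG hFG
    have h1 := closure_convexHull_extremePoints ((IsFaceOf.isExposed hF).isCompact hc)
      ((IsFaceOf.isExposed hF).convex hconv)
    have h2 := closure_convexHull_extremePoints ((IsFaceOf.isExposed hG).isCompact hc)
      ((IsFaceOf.isExposed hG).convex hconv)
    simp only at hFG
    rw [← h1, ← h2, hFG]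

theorem continuous_affFun (u : Set (Fin n → ℝ) → (Fin n → ℤ)) (lam : Set (Fin n → ℝ) → ℤ)
    (k : Set (Fin n → ℝ)) : Continuous (affFun u lam k) := by
  unfold affFun dotProduct
  fun_prop

theorem affFun_combo (u : Set (Fin n → ℝ) → (Fin n → ℤ)) (lam : Set (Fin n → ℝ) → ℤ)
    (k : Set (Fin n → ℝ)) {a b : ℝ} (hab : a + b = 1) (x y : Fin n → ℝ) :
    affFun u lam k (a • x + b • y) = a * affFun u lam k x + b * affFun u lam k y := by
  simp only [affFun, add_dotProduct, smul_dotProduct, smul_eq_mul]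
  linear_combination (-(lam k : ℝ)) * hab

/-- An extreme point is the only point at which its active constraints are all active; hence it is
a face, with supporting functional minus the sum of the active normals. -/
theorem isFaceOf_of_mem_extremePoints {P : Set (Fin n → ℝ)}
    {u : Set (Fin n → ℝ) → (Fin n → ℤ)} {lam : Set (Fin n → ℝ) → ℤ}
    {Fs : Finset (Set (Fin n → ℝ))} (hP : ∀ x, x ∈ P ↔ ∀ k ∈ Fs, 0 ≤ affFun u lam k x)
    {x : Fin n → ℝ} (hx : x ∈ P.extremePoints ℝ) : IsFaceOf P {x} := by
  have hxP := hx.1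
  have key : ∀ y ∈ P, (∀ k ∈ Fs, affFun u lam k x = 0 → affFun u lam k y = 0) → y = x := by
    intro y hy hact
    obtain ⟨ε, hε, hfeas⟩ := exists_small_step u lam Fs x (x - y) ((hP x).1 hxP) (by
      intro k hk hk0
      have h1 := affFun_sub u lam k x (x - y)
      rw [sub_sub_cancel, hact k hk hk0, hk0] at h1
      linarith)
    refine hx.2 hy ((hP _).2 hfeas) ⟨ε / (1 + ε), 1 / (1 + ε), by positivity, by positivity, ?_, ?_⟩
    · field_simp
      ring
    · funext i
      simp only [Pi.add_apply, Pi.smul_apply, Pi.sub_apply, smul_eq_mul]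
      field_simp
      ring
  set A := Fs.filter fun k => affFun u lam k x = 0 with hA
  have hsum : ∀ y, ∑ k ∈ A, affFun u lam k y =
      ∑ k ∈ A, y ⬝ᵥ intVec (u k) + ∑ k ∈ A, (lam k : ℝ) := by
    intro y
    rw [← Finset.sum_add_distrib]
    rfl
  have hx0 : ∑ k ∈ A, affFun u lam k x = 0 :=
    Finset.sum_eq_zero fun k hk => (Finset.mem_filter.1 hk).2
  have hnn : ∀ y ∈ P, ∀ k ∈ A, 0 ≤ affFun u lam k y := fun y hy k hk =>
    (hP y).1 hy k (Finset.mem_filter.1 hk).1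
  refine Or.inr ⟨Set.singleton_nonempty x,
    { toFun := fun y => -∑ k ∈ A, y ⬝ᵥ intVec (u k)
      map_add' := fun y y' => by simp only [add_dotProduct, Finset.sum_add_distrib]; ring
      map_smul' := fun c y => by
        simp only [smul_dotProduct, ← Finset.smul_sum, smul_neg, RingHom.id_apply] }, ?_⟩
  ext y
  simp only [Set.mem_singleton_iff, Set.mem_ofPred_eq, LinearMap.coe_mk, AddHom.coe_mk]
  constructor
  · rintro rfl
    refine ⟨hxP, fun p hp => ?_⟩
    have h1 := Finset.sum_nonneg (hnn p hp)
    rw [hsum] at h1 hx0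
    linarith
  · rintro ⟨hy, hmax⟩
    have h1 := hmax x hxP
    have h2 : ∑ k ∈ A, affFun u lam k y = 0 := by
      refine le_antisymm ?_ (Finset.sum_nonneg (hnn y hy))
      rw [hsum] at hx0 ⊢
      linarith
    rw [Finset.sum_eq_zero_iff_of_nonneg (hnn y hy)] at h2
    exact key y hy fun k hk hk0 => h2 k (Finset.mem_filter.2 ⟨hk, hk0⟩)

/-- A linear functional attains its minimum over the face cut out by `K` at an extreme point of
the polytope. -/
theorem exists_min_extremePoint {P : Set (Fin n → ℝ)} (hc : IsCompact P)
    {u : Set (Fin n → ℝ) → (Fin n → ℤ)} {lam : Set (Fin n → ℝ) → ℤ}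
    {Fs : Finset (Set (Fin n → ℝ))} (hP : ∀ x, x ∈ P ↔ ∀ k ∈ Fs, 0 ≤ affFun u lam k x)
    {K : Finset (Set (Fin n → ℝ))} (hK : K ⊆ Fs) (ξ : Fin n → ℝ)
    (hne : ∃ x ∈ P, ∀ k ∈ K, affFun u lam k x = 0) :
    ∃ v ∈ P.extremePoints ℝ, (∀ k ∈ K, affFun u lam k v = 0) ∧
      ∀ x ∈ P, (∀ k ∈ K, affFun u lam k x = 0) → ξ ⬝ᵥ v ≤ ξ ⬝ᵥ x := by
  set Q : Set (Fin n → ℝ) := P ∩ {x | ∀ k ∈ K, affFun u lam k x = 0} with hQ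
  have hQc : IsCompact Q := by
    refine hc.inter_right ?_
    simp only [Set.ofPred_forall]
    exact isClosed_biInter fun k _ => isClosed_eq (continuous_affFun u lam k) continuous_const
  have hQe : IsExtreme ℝ P Q := by
    refine ⟨Set.inter_subset_left, ?_⟩
    rintro x hx y hy w ⟨-, hw⟩ ⟨a, b, ha, hb, hab, rfl⟩
    refine ⟨hx, fun k hk => ?_⟩
    have h1 := hw k hk
    rw [affFun_combo u lam k hab] at h1
    have h2 := (hP x).1 hx k (hK hk)
    have h3 := mul_nonneg hb.le ((hP y).1 hy k (hK hk))
    have h4 : a * affFun u lam k x = 0 := le_antisymm (by linarith) (mul_nonneg ha.le h2)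
    exact (mul_eq_zero.1 h4).resolve_left ha.ne'
  have hcont : Continuous fun x : Fin n → ℝ => ξ ⬝ᵥ x := by
    unfold dotProduct
    fun_prop
  obtain ⟨q, hq, hqmin⟩ := hQc.exists_isMinOn hne hcont.continuousOn
  set R : Set (Fin n → ℝ) := {x ∈ Q | ξ ⬝ᵥ x ≤ ξ ⬝ᵥ q} with hR
  have hRc : IsCompact R := hQc.inter_right (isClosed_le hcont continuous_const)
  have hRe : IsExtreme ℝ Q R := by
    refine ⟨fun x hx => hx.1, ?_⟩
    rintro x hx y hy w ⟨-, hw⟩ ⟨a, b, ha, hb, hab, rfl⟩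
    refine ⟨hx, ?_⟩
    rw [dotProduct_add, dotProduct_smul, dotProduct_smul, smul_eq_mul, smul_eq_mul] at hw
    have h1 : ξ ⬝ᵥ q ≤ ξ ⬝ᵥ y := hqmin hy
    have h2 := mul_le_mul_of_nonneg_left h1 hb.le
    have h3 : a * (ξ ⬝ᵥ x) ≤ a * (ξ ⬝ᵥ q) := by
      have : a * (ξ ⬝ᵥ q) + b * (ξ ⬝ᵥ q) = ξ ⬝ᵥ q := by rw [← add_mul, hab, one_mul]
      linarith
    exact le_of_mul_le_mul_left h3 ha
  obtain ⟨v, hv⟩ := hRc.extremePoints_nonempty ⟨q, hq, le_rfl⟩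
  refine ⟨v, (hQe.trans hRe).extremePoints_subset_extremePoints hv, hv.1.1.2, fun x hx hxK => ?_⟩
  exact hv.1.2.trans (hqmin ⟨hx, hxK⟩)

/-- A face containing a vertex is cut out by the facets containing it. -/
theorem mem_face_iff {P : Set (Fin n → ℝ)}
    {u : Set (Fin n → ℝ) → (Fin n → ℤ)} {lam : Set (Fin n → ℝ) → ℤ}
    {Fv : (Fin n → ℝ) → Fin n → Set (Fin n → ℝ)} {m : (Fin n → ℝ) → Fin n → (Fin n → ℝ)}
    {Fs : Finset (Set (Fin n → ℝ))} {V : Finset (Fin n → ℝ)} (D : SimpleSystem u lam Fv m Fs V)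
    (hP : ∀ x, x ∈ P ↔ ∀ k ∈ Fs, 0 ≤ affFun u lam k x)
    (hfacet : ∀ k ∈ Fs, ∀ x, x ∈ k ↔ x ∈ P ∧ affFun u lam k x = 0)
    {E : Set (Fin n → ℝ)} (hE : IsFaceOf P E) {v : Fin n → ℝ} (hv : v ∈ V) (hvE : v ∈ E)
    (x : Fin n → ℝ) :
    x ∈ E ↔ (∀ k ∈ Fs.filter (fun k => E ⊆ k), affFun u lam k x = 0) ∧
      ∀ k ∈ Fs, 0 ≤ affFun u lam k x := by
  have hEP : E ⊆ P := hE.isExposed.subset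
  constructor
  · intro hx
    refine ⟨fun k hk => ?_, (hP x).1 (hEP hx)⟩
    obtain ⟨hk, hEk⟩ := Finset.mem_filter.1 hk
    exact ((hfacet k hk x).1 (hEk hx)).2
  · rintro ⟨hx0, hx⟩
    rcases hE with rfl | ⟨-, w, hw⟩
    · exact (hP x).2 hx
    have hvw : ∀ p ∈ P, w p ≤ w v := by
      rw [hw] at hvE
      exact hvE.2
    have hexp : ∀ y, w y - w v = ∑ j, affFun u lam (Fv v j) y * w (m v j) := by
      intro y
      rw [← map_sub, D.expand_sub hv y, map_sum]
      simp
    have hneg : ∀ j, w (m v j) ≤ 0 := by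
      intro j
      obtain ⟨ε, hε, hfeas⟩ := exists_small_step u lam Fs v (m v j) (D.feas v hv) (by
        intro k hk hk0
        obtain ⟨j', rfl⟩ := (D.active v hv k hk).1 hk0
        rw [D.dual v hv]
        split_ifs <;> norm_num)
      have h1 := hvw _ ((hP _).2 hfeas)
      rw [map_add, map_smul, smul_eq_mul] at h1
      by_contra hcon
      have := mul_pos hε (not_le.1 hcon)
      linarith
    have hterm : ∀ j, affFun u lam (Fv v j) x * w (m v j) = 0 := by
      intro j
      rcases (hneg j).eq_or_lt with h0 | h0
      · rw [h0, mul_zero]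
      -- a facet opposite to a strictly `w`-decreasing edge contains all of `E`
      have hsub : E ⊆ Fv v j := by
        intro y hy
        have hyP := hEP hy
        refine (hfacet _ (D.mem v hv j) y).2 ⟨hyP, ?_⟩
        have hyw : w y - w v = 0 := by
          rw [hw] at hy
          exact sub_eq_zero.2 (le_antisymm (hvw y hyP) (hy.2 v (hEP hvE)))
        rw [hexp y, Finset.sum_eq_zero_iff_of_nonpos] at hyw
        · exact (mul_eq_zero.1 (hyw j (Finset.mem_univ j))).resolve_right h0.ne
        · intro j' _
          exact mul_nonpos_of_nonneg_of_nonpos ((hP y).1 hyP _ (D.mem v hv j')) (hneg j')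
      rw [hx0 _ (Finset.mem_filter.2 ⟨D.mem v hv j, hsub⟩), zero_mul]
    have hxw : w x = w v := by
      have := hexp x
      rw [Finset.sum_eq_zero fun j _ => hterm j] at this
      linarith
    rw [hw]
    refine ⟨(hP x).2 hx, fun p hp => ?_⟩
    rw [hxw]
    exact hvw p hp

/-- A bounded set contains finitely many lattice points. -/
theorem finite_intVec_mem {P : Set (Fin n → ℝ)} (hc : IsCompact P) :
    {p : Fin n → ℤ | intVec p ∈ P}.Finite := by
  obtain ⟨r, hr⟩ := hc.isBounded.exists_norm_le
  refine (Set.finite_Icc (fun _ : Fin n => -⌈r⌉) (fun _ => ⌈r⌉)).subset ?_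
  intro p hp
  have h1 : ∀ i, |(p i : ℝ)| ≤ ⌈r⌉ := fun i =>
    ((norm_le_pi_norm (intVec p) i).trans (hr _ hp)).trans (Int.le_ceil r)
  refine ⟨fun i => ?_, fun i => ?_⟩
  · have := (abs_le.1 (h1 i)).1
    exact_mod_cast this
  · have := (abs_le.1 (h1 i)).2
    exact_mod_cast this

end Geometry

/-- Let `P ⊂ ℝ^n` be a full-dimensional simple lattice polytope with
vertex data as in Brion–Vergne, and let `E` be a face of `P`.  For `z ∈ ℂ^n` with
`χ_γ(m_v^F)·exp⟨m_v^F,z⟩ ≠ 1` for every vertex `v` of `E`, every `γ ∈ G(σ_v)` and every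
`F ∈ 𝓕^v` not containing `E`:
`∑_{m ∈ ℤ^n ∩ E} e^{⟨m,z⟩} = ∑_{v vertex of E} (e^{⟨v,z⟩}/|G(σ_v)|) ∑_{γ ∈ G(σ_v)}
   ∏_{F ∈ 𝓕^v, E ⊄ F} 1/(1 - χ_γ(m_v^F) e^{⟨m_v^F,z⟩})`. -/
theorem stmt15 (n : ℕ) (P : Set (Fin n → ℝ))
    (S : Finset (Fin n → ℤ))
    (hP : P = convexHull ℝ (intVec '' (S : Set (Fin n → ℤ))))
    (hfull : affineSpan ℝ P = ⊤) (hsimple : IsSimple P)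
    (u : Set (Fin n → ℝ) → (Fin n → ℤ)) (lam : Set (Fin n → ℝ) → ℤ)
    (hPdesc : P = {x | ∀ F, IsFaceOf P F → faceDim F = n - 1 →
      0 ≤ (∑ i, x i * (u F i : ℝ)) + (lam F : ℝ)})
    (hprim : ∀ F, IsFaceOf P F → faceDim F = n - 1 →
      ∀ c : ℤ, 0 < c → (∀ i, c ∣ u F i) → c = 1)
    (hfacet : ∀ F, IsFaceOf P F → faceDim F = n - 1 →
      F = {x | x ∈ P ∧ (∑ i, x i * (u F i : ℝ)) + (lam F : ℝ) = 0})
    (Fv : (Fin n → ℝ) → Fin n → Set (Fin n → ℝ))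
    (hFv : ∀ x, IsFaceOf P {x} → Function.Injective (Fv x) ∧
      (∀ j, IsFaceOf P (Fv x j) ∧ faceDim (Fv x j) = n - 1 ∧ x ∈ Fv x j) ∧
      (∀ F, IsFaceOf P F → faceDim F = n - 1 → x ∈ F → ∃ j, F = Fv x j))
    (m : (Fin n → ℝ) → Fin n → (Fin n → ℝ))
    (hm : ∀ x, IsFaceOf P {x} → ∀ j j' : Fin n,
      (∑ i, m x j i * (u (Fv x j') i : ℝ)) = if j = j' then 1 else 0)
    (E : Set (Fin n → ℝ)) (hE : IsFaceOf P E)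
    (z : Fin n → ℂ)
    (hz : ∀ x, IsFaceOf P {x} → x ∈ E →
      ∀ γ : (Fin n → ℤ) ⧸ normalLattice u Fv x, ∀ j : Fin n, ¬ E ⊆ Fv x j →
        chi u Fv m x γ j * Complex.exp (cpair (m x j) z) ≠ 1) :
    ∑ᶠ mm ∈ {mm : Fin n → ℤ | intVec mm ∈ E}, Complex.exp (cpair (intVec mm) z)
      = ∑ᶠ x ∈ {x : Fin n → ℝ | IsFaceOf P {x} ∧ x ∈ E},
          Complex.exp (cpair x z) / (Nat.card ((Fin n → ℤ) ⧸ normalLattice u Fv x) : ℂ) *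
            ∑ᶠ γ : (Fin n → ℤ) ⧸ normalLattice u Fv x,
              ∏ j ∈ Finset.univ.filter (fun j : Fin n => ¬ E ⊆ Fv x j),
                (1 - chi u Fv m x γ j * Complex.exp (cpair (m x j) z))⁻¹ := by
  have hc : IsCompact P := by
    rw [hP]
    exact (S.finite_toSet.image intVec).isCompact_convexHull ℝ
  have hconv : Convex ℝ P := by
    rw [hP]
    exact convex_convexHull ℝ _
  have hext : P.extremePoints ℝ ⊆ intVec '' (S : Set (Fin n → ℤ)) := by
    rw [hP]
    exact extremePoints_convexHull_subset
  have hextfin : (P.extremePoints ℝ).Finite := (S.finite_toSet.image intVec).subset hext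
  have hPne : P.Nonempty := AffineSubspace.nonempty_of_affineSpan_eq_top ℝ _ _ hfull
  have hFsfin : {F | IsFaceOf P F ∧ faceDim F = n - 1}.Finite :=
    (finite_setOf_isFaceOf hc hconv hextfin).subset fun F hF => hF.1
  have hvext : ∀ x, IsFaceOf P {x} → x ∈ P.extremePoints ℝ := fun x hx =>
    isExtreme_singleton.1 hx.isExposed.isExtreme
  have hVfin : {x | IsFaceOf P {x}}.Finite := hextfin.subset hvext
  set Fs := hFsfin.toFinset with hFs
  set V := hVfin.toFinset with hV
  have memFs : ∀ F, F ∈ Fs ↔ IsFaceOf P F ∧ faceDim F = n - 1 := fun F => by simp [hFs]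
  have memV : ∀ x, x ∈ V ↔ IsFaceOf P {x} := fun x => by simp [hV]
  have hPmem : ∀ x, x ∈ P ↔ ∀ k ∈ Fs, 0 ≤ affFun u lam k x := by
    intro x
    constructor
    · intro hx k hk
      rw [hPdesc] at hx
      exact hx k ((memFs k).1 hk).1 ((memFs k).1 hk).2
    · intro hx
      rw [hPdesc]
      exact fun F h1 h2 => hx F ((memFs F).2 ⟨h1, h2⟩)
  have hfac : ∀ k ∈ Fs, ∀ x, x ∈ k ↔ x ∈ P ∧ affFun u lam k x = 0 := by
    intro k hk x
    exact Set.ext_iff.1 (hfacet k ((memFs k).1 hk).1 ((memFs k).1 hk).2) x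
  have hVP : ∀ v ∈ V, v ∈ P := fun v hv => (hvext v ((memV v).1 hv)).1
  have hextV : ∀ v ∈ P.extremePoints ℝ, v ∈ V := fun v hv =>
    (memV v).2 (isFaceOf_of_mem_extremePoints hPmem hv)
  have D : SimpleSystem u lam Fv m Fs V :=
    { feas := fun v hv => (hPmem v).1 (hVP v hv)
      inj := fun v hv => (hFv v ((memV v).1 hv)).1
      mem := fun v hv j => by
        have h := (hFv v ((memV v).1 hv)).2.1 j
        exact (memFs _).2 ⟨h.1, h.2.1⟩
      active := fun v hv k hk => by
        have h := hFv v ((memV v).1 hv)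
        constructor
        · intro h0
          obtain ⟨j, hj⟩ := h.2.2 k ((memFs k).1 hk).1 ((memFs k).1 hk).2
            ((hfac k hk v).2 ⟨hVP v hv, h0⟩)
          exact ⟨j, hj.symm⟩
        · rintro ⟨j, rfl⟩
          exact ((hfac _ hk v).1 (h.2.1 j).2.2).2
      dual := fun v hv => hm v ((memV v).1 hv)
      integral := fun v hv => by
        obtain ⟨p, -, hp⟩ := hext (hvext v ((memV v).1 hv))
        exact ⟨p, hp⟩
      exists_min := fun K hK ξ ⟨v₀, hv₀, hv₀K⟩ => by
        obtain ⟨v, hv, h1, h2⟩ :=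
          exists_min_extremePoint hc hPmem hK ξ ⟨v₀, hVP v₀ hv₀, hv₀K⟩
        exact ⟨v, hextV v hv, h1, fun x hx hxK => h2 x ((hPmem x).2 hx) hxK⟩ }
  have hEne : E.Nonempty := by
    rcases hE with rfl | ⟨h, -⟩
    · exact hPne
    · exact h
  obtain ⟨v₀, hv₀⟩ := (hE.isExposed.isCompact hc).extremePoints_nonempty hEne
  have hv₀V : v₀ ∈ V :=
    hextV v₀ (hE.isExposed.isExtreme.extremePoints_subset_extremePoints hv₀)
  have hmem := mem_face_iff D hPmem hfac hE hv₀V hv₀.1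
  set K₀ := Fs.filter (fun k => E ⊆ k) with hK₀
  have hK₀Fs : K₀ ⊆ Fs := Finset.filter_subset _ _
  have hvE : ∀ v ∈ V, K₀ ⊆ facetsAt Fv v ↔ v ∈ E := by
    intro v hv
    rw [D.subset_facetsAt hv hK₀Fs, hmem]
    exact ⟨fun h => ⟨h, D.feas v hv⟩, fun h => h.1⟩
  have hjE : ∀ v ∈ V, ∀ j, Fv v j ∉ K₀ ↔ ¬ E ⊆ Fv v j := by
    intro v hv j
    simp [hK₀, D.mem v hv j]
  have hTfin : {p : Fin n → ℤ | intVec p ∈ E}.Finite :=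
    (finite_intVec_mem hc).subset fun p hp => hE.isExposed.subset hp
  have hmain := D.sum_exp hK₀Fs ⟨v₀, hv₀V, (hvE v₀ hv₀V).2 hv₀.1⟩ (z := z)
    (fun v hv hvK γ j hj =>
      hz v ((memV v).1 hv) ((hvE v hv).1 hvK) γ j ((hjE v hv j).1 hj))
    hTfin.toFinset (fun p => by simpa using hmem (intVec p))
  have hVEfin : {x | IsFaceOf P {x} ∧ x ∈ E}.Finite := hVfin.subset fun x hx => hx.1
  have hfilter : hVEfin.toFinset = V.filter (fun v => K₀ ⊆ facetsAt Fv v) := by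
    ext v
    simp only [Set.Finite.mem_toFinset, Set.mem_ofPred_eq, Finset.mem_filter]
    rw [← memV]
    exact and_congr_right fun hv => (hvE v hv).symm
  rw [finsum_mem_eq_finite_toFinset_sum _ hTfin, finsum_mem_eq_finite_toFinset_sum _ hVEfin, hmain,
    hfilter]
  refine Finset.sum_congr rfl fun v hv => ?_
  have hvV := (Finset.mem_filter.1 hv).1
  rw [vertexTerm, Finset.filter_congr fun j _ => hjE v hvV j]
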